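/- arXiv:1008.1007 — 12 statements merged into one kernel-verified Lean document; each statement's English description precedes it below -/
import Mathlib

section
/- Let σ : R[t] → R[t] be the map that applies the ring involution of R = ℤ[A,A⁻¹] sending A to A⁻¹ to each coefficient and fixes t. Then for every integer n, σ(P_n) = P_{−n}. -/
open Polynomial
open LaurentPolynomial (T)

noncomputable section

abbrev R : Type := LaurentPolynomial ℤ


/-- `P` is the family of polynomials `P n ∈ R[t]` defined by `P 0 = -A^2 - A^-2`,
`P 1 = -A^3 t` and the recurrence `P n = A t P (n-1) - A^2 P (n-2)` for all `n : ℤ`. -/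
def IsP (P : ℤ → R[X]) : Prop :=
  P 0 = C (-T 2 - T (-2)) ∧ P 1 = C (-T 3) * X ∧
    ∀ n : ℤ, P n = C (T 1) * X * P (n - 1) - C (T 2) * P (n - 2)

theorem stmt_0 (P : ℤ → R[X]) (hP : IsP P)
    (σ : R →+* R) (hσ : σ (T 1) = T (-1)) :
    ∀ n : ℤ, (P n).map σ = P (-n) := by
  obtain ⟨h0, h1, hrec⟩ := hP
  have hT2 : (T 2 : R) = T 1 * T 1 := by rw [← LaurentPolynomial.T_add]; norm_num
  have hT3 : (T 3 : R) = T 1 * T 1 * T 1 := by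
    rw [← LaurentPolynomial.T_add, ← LaurentPolynomial.T_add]; norm_num
  have hTm2 : (T (-2) : R) = T (-1) * T (-1) := by
    rw [← LaurentPolynomial.T_add]; norm_num
  have hu : (T 1 : R) * T (-1) = 1 := by
    rw [← LaurentPolynomial.T_add]; norm_num
  have hσ' : σ (T (-1)) = T 1 := by
    have h := congrArg σ hu
    rw [map_mul, hσ, map_one] at h
    linear_combination (T 1) * h - σ (T (-1)) * hu
  rw [hT2, hTm2] at h0
  rw [hT3] at h1
  simp only [hT2] at hrec
  have hU : (C (T 1 : R)) * C (T (-1)) = 1 := by rw [← C_mul, hu, C_1]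
  simp only [C_mul, C_neg, C_sub] at h0 h1 hrec
  have hm : ∀ n : ℤ, (P n).map σ = C (T (-1)) * X * (P (n - 1)).map σ
      - C (T (-1)) * C (T (-1)) * (P (n - 2)).map σ := by
    intro n
    conv_lhs => rw [hrec n]
    simp [hσ]
  have m0 : (P 0).map σ = P 0 := by
    rw [h0]; simp [hσ, hσ']; ring
  have m1 : (P 1).map σ = P (-1) := by
    have e := hrec 1
    norm_num at e
    rw [h0, h1] at e
    rw [h1]
    simp only [Polynomial.map_mul, Polynomial.map_neg, map_C, map_X, hσ]
    generalize (C (T 1 : R)) = a at *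
    generalize (C (T (-1) : R)) = b at *
    generalize P (-1) = q at *
    linear_combination (-b * b) * e + (q * (a * b + 1) + b ^ 3 * X + b * a ^ 2 * X * 0) * hU
  have key : ∀ n : ℤ, (P n).map σ = P (-n) ∧ (P (n + 1)).map σ = P (-n - 1) := by
    intro n
    induction n using Int.induction_on with
    | zero => exact ⟨by simpa using m0, by simpa using m1⟩
    | succ i ih =>
      obtain ⟨ih0, ih1⟩ := ih
      refine ⟨by rw [ih1]; congr 1; ring, ?_⟩
      have e := hm ((i : ℤ) + 1 + 1)
      have f := hrec (-(i : ℤ))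
      rw [show (i : ℤ) + 1 + 1 - 1 = i + 1 by ring, show (i : ℤ) + 1 + 1 - 2 = i by ring,
        ih0, ih1] at e
      rw [e, show -((i : ℤ) + 1) - 1 = -i - 2 by ring]
      generalize (C (T 1 : R)) = a at *
      generalize (C (T (-1) : R)) = b at *
      generalize P (-(i : ℤ) - 2) = q at *
      generalize P (-(i : ℤ) - 1) = r at *
      linear_combination (-b * b) * f + (q * (a * b + 1) - b * X * r) * hU
    | pred i ih =>
      obtain ⟨ih0, ih1⟩ := ih
      have e := hm (-(i : ℤ) + 1)
      have f := hrec (-(-(i : ℤ) - 1))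
      rw [show -(i : ℤ) + 1 - 1 = -i by ring, show -(i : ℤ) + 1 - 2 = -i - 1 by ring,
        ih0, ih1] at e
      rw [show -(-(i : ℤ) - 1) - 1 = - -(i : ℤ) by ring,
        show -(-(i : ℤ) - 1) - 2 = - -(i : ℤ) - 1 by ring] at f
      refine ⟨?_, ?_⟩
      · rw [f]
        generalize (C (T 1 : R)) = a at *
        generalize (C (T (-1) : R)) = b at *
        generalize (P (-(i : ℤ) - 1)).map σ = q at *
        generalize P (- -(i : ℤ) - 1) = r at *
        linear_combination (a * a) * e + (a * X * P (- -(i : ℤ)) - q * (a * b + 1)) * hU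
      · rw [show -(i : ℤ) - 1 + 1 = -i by ring, ih0]; congr 1; ring
  exact fun n => (key n).1
end
end

section
/- For every integer n ≥ 0, P_n = −A^{n+2}·Q_n + A^{n−2}·Q_{n−2} and P_{−n} = −A^{−n−2}·Q_n + A^{−n+2}·Q_{n−2} in R[t]. -/
open Polynomial
open LaurentPolynomial (T)

noncomputable section

/-- `Q` is the family of polynomials `Q n ∈ R[t]` (for `n ≥ -2`) defined by `Q (-2) = -1`,
`Q (-1) = 0` and the recurrence `Q n = t Q (n-1) - Q (n-2)` for `n ≥ 0`. -/
def IsQ (Q : ℤ → R[X]) : Prop :=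
  Q (-2) = -1 ∧ Q (-1) = 0 ∧ ∀ n : ℤ, 0 ≤ n → Q n = X * Q (n - 1) - Q (n - 2)

theorem stmt_1 (P : ℤ → R[X]) (hP : IsP P) (Q : ℤ → R[X]) (hQ : IsQ Q) :
    ∀ n : ℤ, 0 ≤ n →
      P n = C (-T (n + 2)) * Q n + C (T (n - 2)) * Q (n - 2) ∧
      P (-n) = C (-T (-n - 2)) * Q n + C (T (-n + 2)) * Q (n - 2) := by
  obtain ⟨p0, p1, hp⟩ := hP
  obtain ⟨q2, q1, hq⟩ := hQ
  have Q0 : Q 0 = 1 := by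
    have := hq 0 le_rfl
    norm_num [q1, q2] at this
    exact this
  have Q1 : Q 1 = X := by
    have := hq 1 (by norm_num)
    norm_num [q1, Q0] at this
    exact this
  have hT : ∀ m k : ℤ, (C (T m) : R[X]) * C (T k) = C (T (m + k)) := by
    intro m k
    rw [← C_mul, LaurentPolynomial.T_add]
  have hT0 : (C (T 0) : R[X]) = 1 := by simp
  -- solving the recurrence downwards
  have hd : ∀ n : ℤ, P (n - 2) = C (T (-1)) * X * P (n - 1) - C (T (-2)) * P n := by
    intro n
    have h := hp n
    have h1 := hT (-2) 1
    have h2 := hT (-2) 2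
    norm_num only at h1 h2
    rw [hT0] at h2
    linear_combination C (T (-2)) * h + (P (n-2)) * (-h2) + X * P (n-1) * h1
  have Pm1 : P (-1) = C (-T (-3)) * X := by
    have h := hd 1
    have h1 := hT (-1) 2
    have h2 := hT (-1) (-2)
    have h3 := hT (-2) 3
    norm_num only at h h1 h2 h3
    rw [p0, p1] at h
    simp only [C_sub, C_neg] at h ⊢
    linear_combination h - X * h1 - X * h2 + X * h3
  have key : ∀ n : ℕ,
      (P n = C (-T ((n:ℤ) + 2)) * Q n + C (T ((n:ℤ) - 2)) * Q (n - 2) ∧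
      P (-n) = C (-T (-(n:ℤ) - 2)) * Q n + C (T (-(n:ℤ) + 2)) * Q (n - 2)) ∧
      (P (n+1) = C (-T ((n:ℤ) + 3)) * Q (n+1) + C (T ((n:ℤ) - 1)) * Q (n - 1) ∧
      P (-n-1) = C (-T (-(n:ℤ) - 3)) * Q (n+1) + C (T (-(n:ℤ) + 1)) * Q (n - 1)) := by
    intro n
    induction n with
    | zero =>
      norm_num [p0, p1, Pm1, Q0, Q1, q1, q2]
      constructor <;> ring
    | succ n ih =>
      obtain ⟨⟨a1, a2⟩, b1, b2⟩ := ih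
      have e1 := hp (n + 2)
      have e2 := hd (-n)
      have f1 := hq (n + 2) (by positivity)
      have f2 := hq n (by positivity)
      have s1 : (n:ℤ) + 2 - 1 = n + 1 := by ring
      have s2 : (n:ℤ) + 2 - 2 = n := by ring
      rw [s1, s2] at e1 f1
      push_cast
      have r1 : (n:ℤ) + 1 + 2 = n + 3 := by ring
      have r2 : (n:ℤ) + 1 - 2 = n - 1 := by ring
      have r3 : (n:ℤ) + 1 + 1 = n + 2 := by ring
      have r4 : (n:ℤ) + 1 - 1 = n := by ring
      have r5 : -((n:ℤ) + 1) = -n - 1 := by ring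
      have r6 : -(n:ℤ) - 1 - 2 = -n - 3 := by ring
      have r7 : -(n:ℤ) - 1 + 2 = -n + 1 := by ring
      have r8 : -(n:ℤ) - 1 - 1 = -n - 2 := by ring
      have r9 : (n:ℤ) + 1 + 3 = n + 4 := by ring
      have r10 : -(n:ℤ) - 1 - 3 = -n - 4 := by ring
      have r11 : -(n:ℤ) - 1 + 1 = -n := by ring
      rw [r1, r2, r3, r4, r5, r6, r7, r8, r9, r10, r11]
      refine ⟨⟨b1, b2⟩, ?_, ?_⟩
      · have t1 := hT 1 (n + 3)
        have t2 := hT 1 (n - 1)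
        have t3 := hT 2 (n + 2)
        have t4 := hT 2 (n - 2)
        rw [show 1 + ((n:ℤ) + 3) = n + 4 by ring] at t1
        rw [show 1 + ((n:ℤ) - 1) = n by ring] at t2
        rw [show 2 + ((n:ℤ) + 2) = n + 4 by ring] at t3
        rw [show 2 + ((n:ℤ) - 2) = n by ring] at t4
        rw [e1, b1, a1, f1]
        simp only [C_neg]
        linear_combination (-X * Q (n+1)) * t1 + X * Q (n-1) * t2 + Q n * t3
          - Q (n-2) * t4 - C (T (n:ℤ)) * f2
      · have t1 := hT (-1) (-n - 3)
        have t2 := hT (-1) (-n + 1)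
        have t3 := hT (-2) (-n - 2)
        have t4 := hT (-2) (-n + 2)
        rw [show -1 + (-(n:ℤ) - 3) = -n - 4 by ring] at t1
        rw [show -1 + (-(n:ℤ) + 1) = -n by ring] at t2
        rw [show -2 + (-(n:ℤ) - 2) = -n - 4 by ring] at t3
        rw [show -2 + (-(n:ℤ) + 2) = -n by ring] at t4
        rw [e2, b2, a2, f1]
        simp only [C_neg]
        linear_combination (-X * Q (n+1)) * t1 + X * Q (n-1) * t2 + Q n * t3
          - Q (n-2) * t4 - C (T (-(n:ℤ))) * f2
  intro n hn
  lift n to ℕ using hn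
  exact (key n).1
end
end

section
/- For every integer n ≥ 2, the identity (A·P_{n−2} + A⁻¹·P_{−n+2}) − (A·P_{−n} + A⁻¹·P_n) = (A^{n+1}+A^{−n−1})(Q_n − Q_{n−2}) − (A^{n−3}+A^{−n+3})(Q_{n−2} − Q_{n−4}) holds in R[t]. -/
open Polynomial
open LaurentPolynomial (T)

noncomputable section

theorem cT_add (a b : ℤ) : (C (T (a + b)) : R[X]) = C (T a) * C (T b) := by
  rw [LaurentPolynomial.T_add, C_mul]

theorem cT_mul (a b c : ℤ) (h : a + b = c) : (C (T a) : R[X]) * C (T b) = C (T c) := by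
  rw [← h, cT_add]

theorem cT_zero : (C (T 0) : R[X]) = 1 := by
  rw [LaurentPolynomial.T_zero, C_1]

theorem Q_rec (Q : ℤ → R[X]) (hQ : IsQ Q) (a b c : ℤ) (ha : 0 ≤ a) (hb : b = a - 1)
    (hc : c = a - 2) : Q a = X * Q b - Q c := by
  subst hb hc; exact hQ.2.2 a ha

theorem P_pos (P : ℤ → R[X]) (hP : IsP P) (Q : ℤ → R[X]) (hQ : IsQ Q) (n : ℕ) :
    (P n = -(C (T (n + 2)) * Q n) + C (T (n - 2)) * Q (n - 2)) ∧
    (P (n + 1) = -(C (T (n + 3)) * Q (n + 1)) + C (T (n - 1)) * Q (n - 1)) := by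
  have q0 : Q 0 = 1 := by
    rw [Q_rec Q hQ 0 (-1) (-2) (by simp) (by simp) (by simp), hQ.1, hQ.2.1]; ring
  have q1 : Q 1 = X := by
    rw [Q_rec Q hQ 1 0 (-1) (by simp) (by simp) (by simp), q0, hQ.2.1]; ring
  induction n with
  | zero =>
    constructor
    · simp [hP.1, hQ.1, q0]; ring
    · simp [hP.2.1, hQ.2.1, q1]; ring
  | succ n ih =>
    obtain ⟨h1, h2⟩ := ih
    have e1 : ((n + 1 : ℕ) : ℤ) = n + 1 := by push_cast; ring
    rw [e1]
    have a1 : (n : ℤ) + 1 + 2 = n + 3 := by ring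
    have a2 : (n : ℤ) + 1 - 2 = n - 1 := by ring
    have a3 : (n : ℤ) + 1 + 1 = n + 2 := by ring
    have a4 : (n : ℤ) + 1 + 3 = n + 4 := by ring
    have a5 : (n : ℤ) + 1 - 1 = n := by ring
    rw [a1, a2, a3, a4, a5]
    refine ⟨h2, ?_⟩
    have r := hP.2.2 (n + 2)
    have b1 : (n : ℤ) + 2 - 1 = n + 1 := by ring
    have b2 : (n : ℤ) + 2 - 2 = n := by ring
    rw [b1, b2, h1, h2] at r
    rw [r, Q_rec Q hQ (n + 2) (n + 1) n (by lia) (by lia) (by lia),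
      Q_rec Q hQ n (n - 1) (n - 2) (by lia) (by lia) (by lia)]
    rw [← cT_mul 1 (n + 3) (n + 4) (by ring), ← cT_mul 1 (n + 2) (n + 3) (by ring),
      ← cT_mul 2 (n - 2) n (by ring), ← cT_mul 1 (n - 2) (n - 1) (by ring),
      ← cT_mul 1 1 2 (by ring)]
    ring

theorem P_neg (P : ℤ → R[X]) (hP : IsP P) (Q : ℤ → R[X]) (hQ : IsQ Q) (n : ℕ) :
    (P (-n) = C (T (-n + 2)) * Q (n - 2) - C (T (-n - 2)) * Q n) ∧
    (P (-n - 1) = C (T (-n + 1)) * Q (n - 1) - C (T (-n - 3)) * Q (n + 1)) := by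
  have q0 : Q 0 = 1 := by
    rw [Q_rec Q hQ 0 (-1) (-2) (by simp) (by simp) (by simp), hQ.1, hQ.2.1]; ring
  have q1 : Q 1 = X := by
    rw [Q_rec Q hQ 1 0 (-1) (by simp) (by simp) (by simp), q0, hQ.2.1]; ring
  have inv1 : (C (T (-1)) : R[X]) * C (T 1) = 1 := by
    rw [cT_mul (-1) 1 0 (by ring), cT_zero]
  have back : ∀ m : ℤ, P (m - 2) = C (T (-1)) * X * P (m - 1)
      - C (T (-1)) * C (T (-1)) * P m := by
    intro m
    have r := hP.2.2 m
    rw [← cT_mul 1 1 2 (by ring)] at r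
    linear_combination (C (T (-1)) * C (T (-1))) * r
      + (C (T (-1)) * X * P (m - 1)
        - (1 + C (T (-1)) * C (T 1)) * P (m - 2)) * inv1
  induction n with
  | zero =>
    constructor
    · simp [hP.1, hQ.1, q0]; ring
    · have r := back 1
      norm_num at r
      simp only [hP.1, hP.2.1] at r
      norm_num [hQ.2.1, q1]
      rw [r]
      simp only [C_sub, C_neg]
      rw [← cT_mul (-1) (-2) (-3) (by ring), ← cT_mul 1 2 3 (by ring)]
      linear_combination (C (T (-1)) * C (T 2) * X) * inv1
  | succ n ih =>
    obtain ⟨h1, h2⟩ := ih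
    have e1 : ((n + 1 : ℕ) : ℤ) = n + 1 := by push_cast; ring
    rw [e1]
    have a0 : -((n : ℤ) + 1) = -n - 1 := by ring
    have a1 : -(n : ℤ) - 1 + 2 = -n + 1 := by ring
    have a2 : (n : ℤ) + 1 - 2 = n - 1 := by ring
    have a3 : -(n : ℤ) - 1 - 2 = -n - 3 := by ring
    have a4 : -(n : ℤ) - 1 - 1 = -n - 2 := by ring
    have a5 : (n : ℤ) + 1 - 1 = n := by ring
    have a6 : -(n : ℤ) - 1 + 1 = -n := by ring
    have a7 : -(n : ℤ) - 1 - 3 = -n - 4 := by ring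
    have a8 : (n : ℤ) + 1 + 1 = n + 2 := by ring
    rw [a0, a1, a2, a3, a4, a5, a6, a7, a8]
    refine ⟨h2, ?_⟩
    rw [back, h1, h2]
    rw [Q_rec Q hQ (n + 2) (n + 1) n (by lia) (by lia) (by lia),
      Q_rec Q hQ n (n - 1) (n - 2) (by lia) (by lia) (by lia)]
    rw [← cT_mul (-1) (-n - 3) (-n - 4) (by ring), ← cT_mul (-1) (-n - 2) (-n - 3) (by ring),
      ← cT_mul (-1) (-n + 1) (-n) (by ring), ← cT_mul (-1) (-n + 2) (-n + 1) (by ring)]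
    ring

theorem stmt_2 (P : ℤ → R[X]) (hP : IsP P) (Q : ℤ → R[X]) (hQ : IsQ Q) :
    ∀ n : ℤ, 2 ≤ n →
      (C (T 1) * P (n - 2) + C (T (-1)) * P (-n + 2)) -
        (C (T 1) * P (-n) + C (T (-1)) * P n) =
      C (T (n + 1) + T (-n - 1)) * (Q n - Q (n - 2)) -
        C (T (n - 3) + T (-n + 3)) * (Q (n - 2) - Q (n - 4)) := by
  intro n hn
  obtain ⟨k, rfl⟩ : ∃ k : ℕ, n = k + 2 := ⟨(n - 2).toNat, by lia⟩
  have p1 := (P_pos P hP Q hQ k).1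
  have p2 := (P_pos P hP Q hQ (k + 2)).1
  have m1 := (P_neg P hP Q hQ k).1
  have m2 := (P_neg P hP Q hQ (k + 2)).1
  have e1 : ((k + 2 : ℕ) : ℤ) = k + 2 := by push_cast; ring
  rw [e1] at p2 m2
  have a1 : (k : ℤ) + 2 - 2 = k := by ring
  have a2 : -((k : ℤ) + 2) + 2 = -k := by ring
  have a3 : (k : ℤ) + 2 - 4 = k - 2 := by ring
  rw [a1] at p2
  rw [a1, a2] at m2
  rw [a1, a2, a3, p1, p2, m1, m2]
  simp only [C_add]
  rw [← cT_mul 1 (k + 2) (k + 2 + 1) (by ring), ← cT_mul (-1) (-k - 2) (-(k + 2) - 1) (by ring),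
    ← cT_mul 1 (k - 2) (k + 2 - 3) (by ring), ← cT_mul (-1) (-k + 2) (-(k + 2) + 3) (by ring)]
  have u1 : (C (T (-1)) : R[X]) * C (T (k + 2 + 2)) = C (T 1) * C (T (k + 2)) := by
    rw [← cT_add, ← cT_add]; congr 2; ring
  have u2 : (C (T (-1)) : R[X]) * C (T k) = C (T 1) * C (T (k - 2)) := by
    rw [← cT_add, ← cT_add]; congr 2; ring
  have u3 : (C (T 1) : R[X]) * C (T (-k)) = C (T (-1)) * C (T (-k + 2)) := by
    rw [← cT_add, ← cT_add]; congr 2; ring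
  have u4 : (C (T 1) : R[X]) * C (T (-(k + 2) - 2)) = C (T (-1)) * C (T (-k - 2)) := by
    rw [← cT_add, ← cT_add]; congr 2; ring
  linear_combination Q (k + 2) * u1 - Q k * u2 - Q k * u3 + Q (k + 2) * u4
end
end

section
/- For every integer n ≥ 2 and every integer i with 1 ≤ i ≤ n/2, the element (A^{n+1}+A^{−n−1})(Q_n − Q_{n−2i}) − q_{n,i}·(Q_{n−2i} − Q_{n−2i−2}) of R[t] lies in the R-submodule of R[t] generated by the elements r'_k for 2 ≤ k ≤ n, where q_{n,i} = ∑_{k=1}^{i} (A^{n−4k+1} + A^{−n+4k−1}). -/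
open Polynomial
open LaurentPolynomial (T)

noncomputable section

theorem sum_Icc_eq_range (f : ℤ → R) (m : ℕ) :
    ∑ k ∈ Finset.Icc (1 : ℤ) (m : ℤ), f k = ∑ k ∈ Finset.range m, f ((k : ℤ) + 1) := by
  induction m with
  | zero => simp
  | succ m ih =>
    have h : Finset.Icc (1 : ℤ) ((m + 1 : ℕ) : ℤ)
        = insert ((m : ℤ) + 1) (Finset.Icc (1 : ℤ) (m : ℤ)) := by
      ext x
      simp only [Finset.mem_Icc, Finset.mem_insert]
      push_cast
      omega
    rw [h, Finset.sum_insert (by simp), Finset.sum_range_succ, ih, add_comm]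

theorem sum_sym (m : ℕ) (c : ℤ) :
    ∑ k ∈ Finset.range (m + 1),
      ((T (c + (2 * m - 4 * k)) : R) + T (-(c + (2 * m - 4 * k)))) =
    (∑ k ∈ Finset.range (m + 1), (T (2 * m - 4 * k : ℤ) : R)) * (T c + T (-c)) := by
  have h2 : ∑ k ∈ Finset.range (m + 1), (T (-(c + (2 * m - 4 * k))) : R) =
      ∑ k ∈ Finset.range (m + 1), (T (-c + (2 * m - 4 * k)) : R) := by
    rw [← Finset.sum_range_reflect]
    refine Finset.sum_congr rfl fun k hk => ?_
    have hk' := Finset.mem_range.1 hk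
    congr 1
    omega
  rw [Finset.sum_add_distrib, h2, mul_add, Finset.sum_mul, Finset.sum_mul]
  simp only [← LaurentPolynomial.T_add, add_comm]

theorem stmt_3 (Q : ℤ → R[X]) (hQ : IsQ Q)
    (r' : ℤ → R[X])
    (hr' : ∀ k : ℤ, 2 ≤ k → r' k =
      C (T (k + 1) + T (-k - 1)) * (Q k - Q (k - 2)) -
        C (T (k - 3) + T (-k + 3)) * (Q (k - 2) - Q (k - 4)))
    (n i : ℤ) (hn : 2 ≤ n) (hi1 : 1 ≤ i) (hi2 : i ≤ n / 2) :
    C (T (n + 1) + T (-n - 1)) * (Q n - Q (n - 2 * i)) -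
      C (∑ k ∈ Finset.Icc (1 : ℤ) i, (T (n - 4 * k + 1) + T (-n + 4 * k - 1))) *
        (Q (n - 2 * i) - Q (n - 2 * i - 2)) ∈
      Submodule.span R (r' '' {k : ℤ | 2 ≤ k ∧ k ≤ n}) := by
  obtain ⟨m, rfl⟩ : ∃ m : ℕ, i = m := ⟨i.toNat, by omega⟩
  clear hi1
  induction m with
  | zero => simp
  | succ m ih =>
    have ih' := ih (by push_cast at hi2; omega)
    have hmem : r' (n - 2 * m) ∈ Submodule.span R (r' '' {k : ℤ | 2 ≤ k ∧ k ≤ n}) :=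
      Submodule.subset_span ⟨_, ⟨by push_cast at hi2; omega, by omega⟩, rfl⟩
    have h := Submodule.add_mem _ ih' (Submodule.smul_mem _
      (∑ k ∈ Finset.range (m + 1), (T (2 * m - 4 * k : ℤ) : R)) hmem)
    have e1 : (∑ k ∈ Finset.Icc (1 : ℤ) (m : ℤ), ((T (n - 4 * k + 1) : R) + T (-n + 4 * k - 1)))
        + (T (n + 1) + T (-n - 1)) =
        (∑ k ∈ Finset.range (m + 1), (T (2 * m - 4 * k : ℤ) : R)) *
          (T (n - 2 * m + 1) + T (-(n - 2 * m) - 1)) := by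
      have := sum_sym m (n - 2 * m + 1)
      rw [show -(n - 2 * (m : ℤ)) - 1 = -(n - 2 * m + 1) by ring, ← this, sum_Icc_eq_range,
        Finset.sum_range_succ']
      congr 1
      · refine Finset.sum_congr rfl fun k _ => ?_
        congr 2 <;> push_cast <;> ring
      · congr 2 <;> push_cast <;> ring
    have e2 : (∑ k ∈ Finset.Icc (1 : ℤ) ((m + 1 : ℕ) : ℤ),
          ((T (n - 4 * k + 1) : R) + T (-n + 4 * k - 1))) =
        (∑ k ∈ Finset.range (m + 1), (T (2 * m - 4 * k : ℤ) : R)) *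
          (T (n - 2 * m - 3) + T (-(n - 2 * m) + 3)) := by
      have := sum_sym m (n - 2 * m - 3)
      rw [show -(n - 2 * (m : ℤ)) + 3 = -(n - 2 * m - 3) by ring, ← this, sum_Icc_eq_range]
      refine Finset.sum_congr rfl fun k _ => ?_
      congr 2 <;> ring
    rw [hr' _ (by push_cast at hi2; omega)] at h
    convert h using 1
    have e3 := congrArg (C : R → R[X]) e1
    rw [C_add, C_mul] at e3
    rw [e2, Polynomial.smul_eq_C_mul, C_mul,
      show n - 2 * ((m + 1 : ℕ) : ℤ) = n - 2 * m - 2 by push_cast; ring,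
      show n - 2 * (m : ℤ) - 2 - 2 = n - 2 * m - 4 by ring]
    linear_combination (Q (n - 2 * m) - Q (n - 2 * m - 2)) * e3
end
end

section
/- The R-submodule of R[t] generated by the elements r'_n for n ≥ 2 is equal to the R-submodule S of R[t] generated by the elements g_n for n ≥ 2. -/
open Polynomial
open LaurentPolynomial (T)

noncomputable section

def SS (m : ℕ) : R := ∑ k ∈ Finset.Icc (1 : ℤ) (m : ℤ), T (2 * (m : ℤ) + 2 - 4 * k)

def aa (n : ℤ) : R := T (n + 1) + T (-n - 1)

def ss : R := T 2 + T (-2)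

theorem aa_rec (n : ℤ) : aa n = ss * aa (n - 2) - aa (n - 4) := by
  unfold aa ss
  simp only [add_mul, mul_add, ← LaurentPolynomial.T_add]
  rw [show (2 : ℤ) + (n - 2 + 1) = n + 1 by ring, show (2 : ℤ) + (-(n - 2) - 1) = -n + 3 by ring,
    show (-2 : ℤ) + (n - 2 + 1) = n - 3 by ring, show (-2 : ℤ) + (-(n - 2) - 1) = -n - 1 by ring,
    show n - 4 + 1 = n - 3 by ring, show -(n - 4) - 1 = -n + 3 by ring]
  ring

theorem Icc_succ (m : ℕ) : Finset.Icc (1 : ℤ) ((m + 1 : ℕ) : ℤ) =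
    insert ((m : ℤ) + 1) (Finset.Icc (1 : ℤ) (m : ℤ)) := by
  ext x
  simp only [Finset.mem_Icc, Finset.mem_insert]
  push_cast
  omega

theorem SS_zero : SS 0 = 0 := by simp [SS]

theorem SS_succ (m : ℕ) : SS (m + 1) = T 2 * SS m + T (-2 * (m : ℤ)) := by
  unfold SS
  rw [Icc_succ, Finset.sum_insert (by simp), Finset.mul_sum, add_comm]
  congr 1
  · refine Finset.sum_congr rfl fun k _ => ?_
    rw [← LaurentPolynomial.T_add]
    congr 1
    push_cast
    ring
  · congr 1
    push_cast
    ring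

theorem SS_succ' (m : ℕ) : T (-2) * SS (m + 1) = SS m + T (-2 * (m : ℤ) - 2) := by
  rw [SS_succ, mul_add, ← mul_assoc, ← LaurentPolynomial.T_add, ← LaurentPolynomial.T_add]
  simp only [neg_add_cancel, LaurentPolynomial.T_zero, one_mul]
  congr 2
  ring

theorem SS_rec (m : ℕ) : SS (m + 2) = ss * SS (m + 1) - SS m := by
  have h := SS_succ (m + 1)
  have h' := SS_succ' m
  rw [show -2 * ((m + 1 : ℕ) : ℤ) = -2 * (m : ℤ) - 2 by push_cast; ring] at h
  unfold ss
  linear_combination h - h'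

theorem SS_one : SS 1 = 1 := by
  have := SS_succ 0
  simpa [SS_zero] using this

def GG (Q : ℤ → R[X]) (e : ℤ) (p q : R[X]) (m : ℕ) : R[X] :=
  C (aa (2 * m + e)) * (Q (2 * m + e) - p) - C (SS m) * q

theorem GG_rec (Q : ℤ → R[X]) (e : ℤ) (p q : R[X]) (m : ℕ) :
    GG Q e p q (m + 2) = (C (aa (2 * m + e + 4)) * (Q (2 * m + e + 4) - Q (2 * m + e + 2))
      - C (aa (2 * m + e)) * (Q (2 * m + e + 2) - Q (2 * m + e)))
      + ss • GG Q e p q (m + 1) - GG Q e p q m := by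
  have h1 := congrArg C (SS_rec m)
  have h2 := congrArg C (aa_rec (2 * m + e + 4))
  rw [show 2 * (m : ℤ) + e + 4 - 2 = 2 * m + e + 2 by ring,
    show 2 * (m : ℤ) + e + 4 - 4 = 2 * m + e by ring] at h2
  unfold GG
  rw [show 2 * ((m + 2 : ℕ) : ℤ) + e = 2 * m + e + 4 by push_cast; ring,
    show 2 * ((m + 1 : ℕ) : ℤ) + e = 2 * m + e + 2 by push_cast; ring, smul_eq_C_mul]
  simp only [C_sub, C_mul] at h1 h2
  linear_combination (Q (2 * m + e + 2) - p) * h2 - q * h1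

theorem key (r G : ℕ → R[X]) (h0 : G 0 = 0) (h1 : G 1 = r 1)
    (hrec : ∀ m, G (m + 2) = r (m + 2) + ss • G (m + 1) - G m) (M : Submodule R R[X]) :
    (∀ m, 1 ≤ m → r m ∈ M) ↔ (∀ m, 1 ≤ m → G m ∈ M) := by
  constructor
  · intro h
    have : ∀ m, G m ∈ M ∧ G (m + 1) ∈ M := by
      intro m
      induction m with
      | zero => exact ⟨h0 ▸ M.zero_mem, h1 ▸ h 1 le_rfl⟩
      | succ k ih =>
        refine ⟨ih.2, ?_⟩
        rw [hrec]
        exact M.sub_mem (M.add_mem (h _ (by omega)) (M.smul_mem _ ih.2)) ih.1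
    exact fun m _ => (this m).1
  · intro h m hm
    have hG : ∀ m, G m ∈ M := by
      intro m
      rcases Nat.eq_zero_or_pos m with rfl | hm
      · exact h0 ▸ M.zero_mem
      · exact h m hm
    obtain _ | _ | m := m
    · omega
    · exact h1 ▸ hG 1
    · have : r (m + 2) = G (m + 2) - ss • G (m + 1) + G m := by rw [hrec]; abel
      change r (m + 2) ∈ M
      rw [this]
      exact M.add_mem (M.sub_mem (hG _) (M.smul_mem _ (hG _))) (hG _)

theorem span_le_iff_parity (f : ℤ → R[X]) (M : Submodule R R[X]) :
    Submodule.span R (f '' {n : ℤ | 2 ≤ n}) ≤ M ↔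
      (∀ m : ℕ, 1 ≤ m → f (2 * m + 0) ∈ M) ∧ (∀ m : ℕ, 1 ≤ m → f (2 * m + 1) ∈ M) := by
  rw [Submodule.span_le]
  constructor
  · intro h
    exact ⟨fun m hm => h ⟨_, by simp only [Set.mem_ofPred_eq]; omega, rfl⟩,
      fun m hm => h ⟨_, by simp only [Set.mem_ofPred_eq]; omega, rfl⟩⟩
  · rintro ⟨h1, h2⟩ _ ⟨n, hn, rfl⟩
    simp only [Set.mem_ofPred_eq] at hn
    rcases Int.emod_two_eq_zero_or_one n with h | h
    · have := h1 (n / 2).toNat (by omega)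
      rwa [show 2 * (((n / 2).toNat : ℕ) : ℤ) + 0 = n by omega] at this
    · have := h2 (n / 2).toNat (by omega)
      rwa [show 2 * (((n / 2).toNat : ℕ) : ℤ) + 1 = n by omega] at this

theorem stmt_4 (Q : ℤ → R[X]) (hQ : IsQ Q)
    (r' : ℤ → R[X])
    (hr' : ∀ k : ℤ, 2 ≤ k → r' k =
      C (T (k + 1) + T (-k - 1)) * (Q k - Q (k - 2)) -
        C (T (k - 3) + T (-k + 3)) * (Q (k - 2) - Q (k - 4)))
    (g : ℤ → R[X])
    (hgeven : ∀ n : ℤ, 2 ≤ n → Even n → g n =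
      C (T (n + 1) + T (-n - 1)) * (Q n - 1) -
        C (2 * (T 1 + T (-1)) * ∑ k ∈ Finset.Icc (1 : ℤ) (n / 2), T (n + 2 - 4 * k)))
    (hgodd : ∀ n : ℤ, 2 ≤ n → ¬ Even n → g n =
      C (T (n + 1) + T (-n - 1)) * (Q n - X) -
        C (2 * ∑ k ∈ Finset.Icc (1 : ℤ) ((n - 1) / 2), T (n + 1 - 4 * k)) * X) :
    Submodule.span R (r' '' {n : ℤ | 2 ≤ n}) = Submodule.span R (g '' {n : ℤ | 2 ≤ n}) := by
  obtain ⟨q2, q1, qr⟩ := hQ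
  have Q0 : Q 0 = 1 := by have := qr 0 le_rfl; simpa [q2, q1] using this
  have Q1 : Q 1 = X := by have := qr 1 (by norm_num); simpa [Q0, q1] using this
  have hr : ∀ k : ℤ, 2 ≤ k → r' k =
      C (aa k) * (Q k - Q (k - 2)) - C (aa (k - 4)) * (Q (k - 2) - Q (k - 4)) := by
    intro k hk
    rw [hr' k hk]
    unfold aa
    rw [show k - 4 + 1 = k - 3 by ring, show -(k - 4) - 1 = -k + 3 by ring]
  have hr2 : ∀ (e : ℤ), 0 ≤ e → ∀ m : ℕ, r' (2 * ((m + 2 : ℕ) : ℤ) + e) =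
      C (aa (2 * m + e + 4)) * (Q (2 * m + e + 4) - Q (2 * m + e + 2))
      - C (aa (2 * m + e)) * (Q (2 * m + e + 2) - Q (2 * m + e)) := by
    intro e he m
    rw [show 2 * ((m + 2 : ℕ) : ℤ) + e = 2 * m + e + 4 by push_cast; ring, hr _ (by omega),
      show 2 * (m : ℤ) + e + 4 - 2 = 2 * m + e + 2 by ring,
      show 2 * (m : ℤ) + e + 4 - 4 = 2 * m + e by ring]
  have hge : ∀ m : ℕ, 1 ≤ m → g (2 * m + 0) = GG Q 0 1 (C (2 * (T 1 + T (-1)))) m := by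
    intro m hm
    rw [hgeven _ (by omega) (by simp)]
    unfold GG aa SS
    rw [show (2 * (m : ℤ) + 0) / 2 = m by omega, ← C_mul, mul_comm (2 * (T 1 + T (-1)))]
    simp only [add_zero]
  have hgo : ∀ m : ℕ, 1 ≤ m → g (2 * m + 1) = GG Q 1 X (2 * X) m := by
    intro m hm
    rw [hgodd _ (by omega) (by simp [parity_simps])]
    unfold GG aa SS
    rw [show (2 * (m : ℤ) + 1 - 1) / 2 = m by omega, C_mul,
      show 2 * (m : ℤ) + 1 + 1 = 2 * m + 2 by ring, show (C (2 : R) : R[X]) = 2 from rfl]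
    ring
  have ke := key (fun m => r' (2 * m + 0)) (GG Q 0 1 (C (2 * (T 1 + T (-1)))))
    (by simp [GG, SS_zero, Q0])
    (by
      have := hr 2 le_rfl
      norm_num at this
      simp only [GG, SS_one]
      norm_num
      rw [this, Q0, q2]
      simp only [aa]
      norm_num
      rw [show (C (2 : R) : R[X]) = 2 from rfl]
      ring)
    (fun m => by rw [GG_rec, hr2 0 le_rfl m])
  have ko := key (fun m => r' (2 * m + 1)) (GG Q 1 X (2 * X))
    (by simp [GG, SS_zero, Q1])
    (by
      have := hr 3 (by norm_num)
      norm_num at this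
      simp only [GG, SS_one]
      norm_num
      rw [this, Q1, q1]
      simp only [aa]
      norm_num
      rfl)
    (fun m => by rw [GG_rec, hr2 1 zero_le_one m])
  have main : ∀ M : Submodule R R[X], Submodule.span R (r' '' {n : ℤ | 2 ≤ n}) ≤ M ↔
      Submodule.span R (g '' {n : ℤ | 2 ≤ n}) ≤ M := by
    intro M
    rw [span_le_iff_parity, span_le_iff_parity]
    refine and_congr ((ke M).trans ?_) ((ko M).trans ?_)
    · exact forall_congr' fun m => forall_congr' fun hm => by rw [hge m hm]
    · exact forall_congr' fun m => forall_congr' fun hm => by rw [hgo m hm]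
  exact le_antisymm ((main _).2 le_rfl) ((main _).1 le_rfl)
end
end

section
/- Every element of the quotient R-module R[t]/S is the image of a unique element of R[t] of the form p_0 + p_1·t + ∑_{k=2}^{N} p_k·(Q_k − ε_k), where N ≥ 1, p_0, p_1 ∈ R, ε_k = 1 if k is even and ε_k = t if k is odd, and for each k ≥ 2 the coefficient p_k lies in ℤ[A] ⊂ R and has degree at most 2k+1 in A (with only finitely many p_k nonzero). -/
open Polynomial
open LaurentPolynomial (T)

noncomputable section

theorem aux_red_exists (m : ℕ) (a : R) :
    ∃ (q : R) (r : ℤ[X]), r.degree < ((m + 1 : ℕ) : WithBot ℕ) ∧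
      a = q * (T ((m + 1 : ℕ) : ℤ) + 1) + toLaurent r := by
  have hmon : (X ^ (m + 1) + 1 : ℤ[X]).Monic := monic_X_pow_add_C (1 : ℤ) (Nat.succ_ne_zero m)
  have hdeg : (X ^ (m + 1) + 1 : ℤ[X]).degree = ((m + 1 : ℕ) : WithBot ℕ) :=
    degree_X_pow_add_C (Nat.succ_pos m) (1 : ℤ)
  have hL : toLaurent (X ^ (m + 1) + 1 : ℤ[X]) = T ((m + 1 : ℕ) : ℤ) + 1 := by
    simp [Polynomial.toLaurent_X_pow]
  have h1 : ∀ f : ℤ[X], ∃ (q : R) (r : ℤ[X]), r.degree < ((m + 1 : ℕ) : WithBot ℕ) ∧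
      toLaurent f = q * (T ((m + 1 : ℕ) : ℤ) + 1) + toLaurent r := by
    intro f
    refine ⟨toLaurent (f /ₘ (X ^ (m + 1) + 1)), f %ₘ (X ^ (m + 1) + 1), ?_, ?_⟩
    · rw [← hdeg]; exact degree_modByMonic_lt _ hmon
    · conv_lhs => rw [← modByMonic_add_div f (X ^ (m + 1) + 1)]
      rw [map_add, map_mul, hL]; ring
  induction a using LaurentPolynomial.induction_on_mul_T with
  | _ f n =>
  induction n generalizing f with
  | zero => simpa using h1 f
  | succ n ih =>
    obtain ⟨q, r, hr, h⟩ := ih f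
    obtain ⟨q', r', hr', h'⟩ := h1 (X ^ m * r)
    refine ⟨T (-1) * q + T (-1) * toLaurent r - q', -r', by rwa [degree_neg], ?_⟩
    have e1 : (T (-((n + 1 : ℕ) : ℤ)) : R) = T (-(n : ℤ)) * T (-1) := by
      rw [← LaurentPolynomial.T_add]; congr 1; push_cast; ring
    have e2 : (T (m : ℤ) : R) = T (-1) * T ((m + 1 : ℕ) : ℤ) := by
      rw [← LaurentPolynomial.T_add]; congr 1; push_cast; ring
    rw [map_mul, Polynomial.toLaurent_X_pow, e2] at h'
    rw [e1, ← mul_assoc, h, map_neg]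
    linear_combination (-1 : R) * h'

theorem aux_red_unique (m : ℕ) (q : R) (r : ℤ[X]) (hr : r.degree < ((m + 1 : ℕ) : WithBot ℕ))
    (h : toLaurent r = q * (T ((m + 1 : ℕ) : ℤ) + 1)) : r = 0 := by
  have hdeg : (X ^ (m + 1) + 1 : ℤ[X]).degree = ((m + 1 : ℕ) : WithBot ℕ) :=
    degree_X_pow_add_C (Nat.succ_pos m) (1 : ℤ)
  have hL : toLaurent (X ^ (m + 1) + 1 : ℤ[X]) = T ((m + 1 : ℕ) : ℤ) + 1 := by
    simp [Polynomial.toLaurent_X_pow]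
  obtain ⟨n, f, hf⟩ := LaurentPolynomial.exists_T_pow q
  have e : r * X ^ n = (X ^ (m + 1) + 1) * f := by
    apply Polynomial.toLaurent_injective
    rw [map_mul, map_mul, hL, hf, Polynomial.toLaurent_X_pow, h]; ring
  have hcop : IsCoprime (X ^ (m + 1) + 1 : ℤ[X]) (X ^ n) := by
    apply IsCoprime.pow_right
    exact ⟨1, -X ^ m, by ring⟩
  have hd : (X ^ (m + 1) + 1 : ℤ[X]) ∣ r := hcop.dvd_of_dvd_mul_right ⟨f, e⟩
  exact eq_zero_of_dvd_of_degree_lt hd (by rw [hdeg]; exact hr)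

def auxRed (k : ℕ) (a : R) : Prop :=
  ∃ q : Polynomial ℤ, q.degree ≤ (2 * k + 1 : ℕ) ∧ a = q.toLaurent

def auxc (k : ℕ) : R := T ((k : ℤ) + 1) + T (-(k : ℤ) - 1)

theorem auxc_eq (k : ℕ) :
    auxc k = T (-(k : ℤ) - 1) * (T (((2 * k + 1) + 1 : ℕ) : ℤ) + 1) := by
  rw [auxc, mul_add, ← LaurentPolynomial.T_add, mul_one]; congr 2; push_cast; ring

theorem aux_lt_iff (d : WithBot ℕ) (n : ℕ) : d < ((n + 1 : ℕ) : WithBot ℕ) ↔ d ≤ (n : WithBot ℕ) := by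
  cases d with
  | bot => simp
  | coe a =>
    change ((a : ℕ) : WithBot ℕ) < _ ↔ ((a : ℕ) : WithBot ℕ) ≤ _
    rw [Nat.cast_lt, Nat.cast_le]; omega

theorem auxRed_exists (k : ℕ) (a : R) : ∃ q r, auxRed k r ∧ a = q * auxc k + r := by
  obtain ⟨q, r, hr, h⟩ := aux_red_exists (2 * k + 1) a
  refine ⟨q * T ((k : ℤ) + 1), toLaurent r, ⟨r, (aux_lt_iff _ _).1 hr, rfl⟩, ?_⟩
  have : (T ((k : ℤ) + 1) * T (-(k : ℤ) - 1) : R) = 1 := by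
    rw [← LaurentPolynomial.T_add, ← LaurentPolynomial.T_zero]; congr 1; ring
  rw [auxc_eq, h]
  linear_combination (-q * (T (((2 * k + 1) + 1 : ℕ) : ℤ) + 1)) * this

theorem auxRed_unique (k : ℕ) (a q : R) (ha : auxRed k a) (h : a = q * auxc k) : a = 0 := by
  obtain ⟨r, hr, rfl⟩ := ha
  rw [aux_red_unique (2 * k + 1) (q * T (-(k : ℤ) - 1)) r ((aux_lt_iff _ _).2 hr)
    (by rw [h, auxc_eq]; ring), map_zero]

theorem auxRed_zero (k : ℕ) : auxRed k 0 := ⟨0, by simp, by simp⟩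

theorem auxRed_sub (k : ℕ) (a b : R) (ha : auxRed k a) (hb : auxRed k b) : auxRed k (a - b) := by
  obtain ⟨r, hr, rfl⟩ := ha
  obtain ⟨s, hs, rfl⟩ := hb
  exact ⟨r - s, (degree_sub_le _ _).trans (max_le hr hs), by simp⟩

theorem auxc_ne (k : ℕ) : auxc k ≠ 0 := by
  intro h
  have h1 : (1 : R) = 0 := auxRed_unique k 1 0 ?_ ?_ |> fun h => h
  · exact one_ne_zero h1
  · exact ⟨1, degree_one_le.trans (by exact_mod_cast Nat.zero_le _), by simp⟩
  · exfalso
    rw [auxc_eq] at h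
    have h2 : (T ((k : ℤ) + 1) * T (-(k : ℤ) - 1) : R) = 1 := by
      rw [← LaurentPolynomial.T_add, ← LaurentPolynomial.T_zero]; congr 1; ring
    have h3 : toLaurent (X ^ (2 * k + 1 + 1) + 1 : ℤ[X]) = 0 := by
      rw [map_add, Polynomial.toLaurent_X_pow, map_one]
      linear_combination (T ((k : ℤ) + 1)) * h - (T (((2 * k + 1) + 1 : ℕ) : ℤ) + 1) * h2
    rw [map_eq_zero_iff _ Polynomial.toLaurent_injective] at h3
    exact (monic_X_pow_add_C (1 : ℤ) (Nat.succ_ne_zero (2 * k + 1))).ne_zero h3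

def auxForm (b : ℕ → R[X]) (N : ℕ) (p : ℕ → R) : R[X] :=
  C (p 0) + C (p 1) * X + ∑ k ∈ Finset.Icc 2 N, C (p k) * b k

theorem auxForm_coeff (b : ℕ → R[X]) (hb : ∀ k n, 2 ≤ k → k < n → (b k).coeff n = 0)
    (N n : ℕ) (hN : 1 ≤ N) (h : N < n) (p : ℕ → R) : (auxForm b N p).coeff n = 0 := by
  rw [auxForm, coeff_add, coeff_add, coeff_C_mul, finset_sum_coeff, coeff_C, coeff_X,
    if_neg (by omega), if_neg (by omega), Finset.sum_eq_zero]
  · simp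
  · intro k hk
    rw [Finset.mem_Icc] at hk
    rw [coeff_C_mul, hb k n hk.1 (by omega), mul_zero]

theorem auxForm_succ (b : ℕ → R[X]) (N : ℕ) (hN : 1 ≤ N) (p : ℕ → R) :
    auxForm b (N + 1) p = auxForm b N p + C (p (N + 1)) * b (N + 1) := by
  rw [auxForm, Finset.sum_Icc_succ_top (by omega), auxForm, add_assoc]
  ring

theorem auxForm_congr (b : ℕ → R[X]) (N : ℕ) (hN : 1 ≤ N) (p p' : ℕ → R)
    (h : ∀ k ≤ N, p k = p' k) : auxForm b N p = auxForm b N p' := by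
  rw [auxForm, auxForm, h 0 (by omega), h 1 hN]
  congr 1
  apply Finset.sum_congr rfl
  intro k hk
  rw [h k (Finset.mem_Icc.1 hk).2]

theorem auxForm_extend (b : ℕ → R[X]) (N M : ℕ) (hN : 1 ≤ N) (hM : N ≤ M) (p : ℕ → R) :
    auxForm b N p = auxForm b M (fun k => if k ≤ N then p k else 0) := by
  induction M, hM using Nat.le_induction with
  | base => exact auxForm_congr b N hN _ _ (fun k hk => by simp [hk])
  | succ M hM ih =>
    rw [auxForm_succ b M (by omega), ← ih, if_neg (by omega)]; simp

theorem aux_unique (b g : ℕ → R[X]) (hb : ∀ k n, 2 ≤ k → k < n → (b k).coeff n = 0)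
    (hb1 : ∀ k, 2 ≤ k → (b k).coeff k = 1)
    (hg : ∀ k n, 2 ≤ k → k < n → (g k).coeff n = 0)
    (hg1 : ∀ k, 2 ≤ k → (g k).coeff k = auxc k) (M : ℕ) (hM : 1 ≤ M) (p h : ℕ → R)
    (hp : ∀ k, 2 ≤ k → auxRed k (p k))
    (e : auxForm b M p = ∑ k ∈ Finset.Icc 2 M, C (h k) * g k) : auxForm b M p = 0 := by
  induction M, hM using Nat.le_induction with
  | base => rw [e]; simp
  | succ M hM ih =>
    have e1 := congrArg (fun f => coeff f (M + 1)) e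
    rw [auxForm_succ b M hM, Finset.sum_Icc_succ_top (by omega)] at e
    rw [auxForm_succ b M hM]
    rw [auxForm_succ b M hM, Finset.sum_Icc_succ_top (by omega), coeff_add, coeff_add,
      auxForm_coeff b hb M _ hM (by omega), finset_sum_coeff, Finset.sum_eq_zero, coeff_C_mul,
      coeff_C_mul, hb1 _ (by omega), hg1 _ (by omega), zero_add, zero_add, mul_one] at e1
    · have hp0 := auxRed_unique _ _ _ (hp (M + 1) (by omega)) e1
      rw [hp0] at e1
      have hh0 : h (M + 1) = 0 := (mul_eq_zero.1 e1.symm).resolve_right (auxc_ne _)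
      rw [hp0, hh0] at e
      rw [hp0]
      simp only [map_zero, zero_mul, add_zero] at e ⊢
      exact ih e
    · intro k hk
      rw [Finset.mem_Icc] at hk
      rw [coeff_C_mul, hg k _ hk.1 (by omega), mul_zero]

theorem aux_exists (b g : ℕ → R[X]) (S : Submodule R R[X]) (hgS : ∀ k, 2 ≤ k → g k ∈ S)
    (hb : ∀ k n, 2 ≤ k → k < n → (b k).coeff n = 0)
    (hb1 : ∀ k, 2 ≤ k → (b k).coeff k = 1)
    (hg : ∀ k n, 2 ≤ k → k < n → (g k).coeff n = 0)
    (hg1 : ∀ k, 2 ≤ k → (g k).coeff k = auxc k) (M : ℕ) (hM : 1 ≤ M) (f : R[X])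
    (hf : ∀ n, M < n → f.coeff n = 0) :
    ∃ p : ℕ → R, (∀ k, 2 ≤ k → auxRed k (p k)) ∧ f - auxForm b M p ∈ S := by
  induction M, hM using Nat.le_induction generalizing f with
  | base =>
    refine ⟨fun k => if k ≤ 1 then f.coeff k else 0, ?_, ?_⟩
    · intro k hk; simp only; rw [if_neg (by omega)]; exact auxRed_zero k
    · have : f = auxForm b 1 (fun k => if k ≤ 1 then f.coeff k else 0) := by
        simp only [auxForm]
        rw [Finset.Icc_eq_empty (by omega)]
        ext1 n
        rcases n with _ | _ | n
        · simp
        · simp [coeff_C]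
        · rw [hf _ (by omega)]; simp [coeff_C, coeff_X]
      rw [← this, sub_self]; exact S.zero_mem
  | succ M hM ih =>
    obtain ⟨q, r, hr, e⟩ := auxRed_exists (M + 1) (f.coeff (M + 1))
    obtain ⟨p, hp, hS⟩ := ih (f - C q * g (M + 1) - C r * b (M + 1)) (by
      intro n hn
      rw [coeff_sub, coeff_sub, coeff_C_mul, coeff_C_mul]
      rcases Nat.lt_or_ge (M + 1) n with h | h
      · rw [hf n h, hg _ _ (by omega) h, hb _ _ (by omega) h]; simp
      · obtain rfl : n = M + 1 := by omega
        rw [e, hg1 _ (by omega), hb1 _ (by omega)]; ring)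
    refine ⟨Function.update p (M + 1) r, ?_, ?_⟩
    · intro k hk
      by_cases h : k = M + 1
      · subst h; simpa using hr
      · simpa [Function.update_of_ne h] using hp k hk
    · rw [auxForm_succ b M hM, Function.update_self,
        auxForm_congr b M hM (Function.update p (M + 1) r) p
          (fun k hk => Function.update_of_ne (by omega) _ _)]
      have h2 := S.add_mem hS (S.smul_mem q (hgS (M + 1) (by omega)))
      rw [smul_eq_C_mul] at h2
      convert h2 using 1
      ring

theorem aux_span (g : ℕ → R[X]) (s : R[X]) (hs : s ∈ Submodule.span R (g '' {n | 2 ≤ n})) :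
    ∃ (M : ℕ) (h : ℕ → R), ∀ M' ≥ M, s = ∑ k ∈ Finset.Icc 2 M', C (h k) * g k := by
  induction hs using Submodule.span_induction with
  | mem x hx =>
    obtain ⟨n, hn, rfl⟩ := hx
    refine ⟨n, fun k => if k = n then 1 else 0, fun M' hM' => ?_⟩
    rw [Finset.sum_eq_single n]
    · simp
    · intro k _ hk; simp [hk]
    · intro h; exact absurd (Finset.mem_Icc.2 ⟨hn, hM'⟩) h
  | zero => exact ⟨0, 0, fun M' _ => by simp⟩
  | add x y _ _ hx hy =>
    obtain ⟨M, h, e⟩ := hx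
    obtain ⟨N, h', e'⟩ := hy
    refine ⟨max M N, h + h', fun M' hM' => ?_⟩
    rw [e M' ((le_max_left _ _).trans hM'), e' M' ((le_max_right _ _).trans hM'),
      ← Finset.sum_add_distrib]
    simp [add_mul]
  | smul a x _ hx =>
    obtain ⟨M, h, e⟩ := hx
    refine ⟨M, fun k => a * h k, fun M' hM' => ?_⟩
    rw [e M' hM', smul_eq_C_mul, Finset.mul_sum]
    simp [mul_assoc]

theorem auxQ (Q : ℤ → R[X]) (hQ : IsQ Q) (n : ℕ) :
    ((∀ m, n < m → (Q n).coeff m = 0) ∧ (Q n).coeff n = 1) ∧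
    ((∀ m, n + 1 < m → (Q (n + 1 : ℕ)).coeff m = 0) ∧ (Q (n + 1 : ℕ)).coeff (n + 1) = 1) := by
  obtain ⟨h2, h1, hr⟩ := hQ
  have q0 : Q 0 = 1 := by rw [hr 0 le_rfl]; norm_num [h1, h2]
  have q1 : Q 1 = X := by rw [hr 1 (by norm_num)]; norm_num [h1, q0]
  induction n with
  | zero =>
    simp only [Nat.cast_zero, q0, zero_add, Nat.cast_one, q1]
    refine ⟨⟨fun m hm => ?_, by simp⟩, fun m hm => ?_, by simp⟩
    · rw [coeff_one, if_neg (by omega)]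
    · rw [coeff_X, if_neg (by omega)]
  | succ n ih =>
    refine ⟨ih.2, ?_⟩
    have e : Q ((n + 1 + 1 : ℕ) : ℤ) = X * Q ((n + 1 : ℕ) : ℤ) - Q (n : ℤ) := by
      rw [hr _ (by positivity)]
      congr 3 <;> · push_cast; ring
    rw [e]
    refine ⟨fun m hm => ?_, ?_⟩
    · obtain ⟨m, rfl⟩ : ∃ m', m = m' + 1 := ⟨m - 1, by omega⟩
      rw [coeff_sub, coeff_X_mul, ih.2.1 m (by omega), ih.1.1 _ (by omega), sub_zero]
    · rw [coeff_sub, coeff_X_mul, ih.2.2, ih.1.1 _ (by omega), sub_zero]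

theorem stmt_5 (Q : ℤ → R[X]) (hQ : IsQ Q)
    (g : ℤ → R[X])
    (hgeven : ∀ n : ℤ, 2 ≤ n → Even n → g n =
      C (T (n + 1) + T (-n - 1)) * (Q n - 1) -
        C (2 * (T 1 + T (-1)) * ∑ k ∈ Finset.Icc (1 : ℤ) (n / 2), T (n + 2 - 4 * k)))
    (hgodd : ∀ n : ℤ, 2 ≤ n → ¬ Even n → g n =
      C (T (n + 1) + T (-n - 1)) * (Q n - X) -
        C (2 * ∑ k ∈ Finset.Icc (1 : ℤ) ((n - 1) / 2), T (n + 1 - 4 * k)) * X)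
    (S : Submodule R R[X]) (hS : S = Submodule.span R (g '' {n : ℤ | 2 ≤ n})) :
    ∀ x : R[X] ⧸ S, ∃! y : R[X],
      (∃ N : ℕ, 1 ≤ N ∧ ∃ p : ℕ → R,
        (∀ k : ℕ, 2 ≤ k → ∃ q : Polynomial ℤ, q.degree ≤ (2 * k + 1 : ℕ) ∧ p k = q.toLaurent) ∧
        y = C (p 0) + C (p 1) * X +
          ∑ k ∈ Finset.Icc 2 N, C (p k) * (Q (k : ℤ) - if Even k then 1 else X)) ∧
      Submodule.Quotient.mk y = x := by
  set b : ℕ → R[X] := fun k => Q (k : ℤ) - if Even k then 1 else X with hbdef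
  set G : ℕ → R[X] := fun k => g (k : ℤ) with hGdef
  have heps : ∀ k n : ℕ, 2 ≤ k → k ≤ n → (if Even k then (1 : R[X]) else X).coeff n = 0 := by
    intro k n hk hn
    split_ifs
    · rw [coeff_one, if_neg (by omega)]
    · rw [coeff_X, if_neg (by omega)]
  have hb : ∀ k n, 2 ≤ k → k < n → (b k).coeff n = 0 := by
    intro k n hk hn
    simp only [hbdef]
    rw [coeff_sub, heps k n hk hn.le, (auxQ Q hQ k).1.1 n hn, sub_zero]
  have hb1 : ∀ k, 2 ≤ k → (b k).coeff k = 1 := by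
    intro k hk
    simp only [hbdef]
    rw [coeff_sub, heps k k hk le_rfl, (auxQ Q hQ k).1.2, sub_zero]
  have hGb : ∀ k, 2 ≤ k → ∀ n, k ≤ n → (G k).coeff n = auxc k * (b k).coeff n := by
    intro k hk n hn
    simp only [hGdef, hbdef]
    by_cases he : Even k
    · rw [hgeven k (by exact_mod_cast hk) (by exact_mod_cast he), if_pos he, coeff_sub,
        coeff_C_mul, coeff_C, if_neg (by omega), sub_zero]
      rfl
    · rw [hgodd k (by exact_mod_cast hk) (by exact_mod_cast he), if_neg he, coeff_sub,
        coeff_C_mul, coeff_C_mul, coeff_X, if_neg (by omega), mul_zero, sub_zero]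
      rfl
  have hg : ∀ k n, 2 ≤ k → k < n → (G k).coeff n = 0 := by
    intro k n hk hn
    rw [hGb k hk n hn.le, hb k n hk hn, mul_zero]
  have hg1 : ∀ k, 2 ≤ k → (G k).coeff k = auxc k := by
    intro k hk
    rw [hGb k hk k le_rfl, hb1 k hk, mul_one]
  have hS' : S = Submodule.span R (G '' {n : ℕ | 2 ≤ n}) := by
    rw [hS]
    congr 1
    ext x
    constructor
    · rintro ⟨n, hn, rfl⟩
      have hn' : (2 : ℤ) ≤ n := hn
      refine ⟨n.toNat, ?_, ?_⟩
      · change 2 ≤ n.toNat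
        omega
      · simp only [hGdef]
        rw [Int.toNat_of_nonneg (by omega)]
    · rintro ⟨n, hn, rfl⟩
      have hn' : 2 ≤ n := hn
      exact ⟨(n : ℤ), by change (2 : ℤ) ≤ n; omega, rfl⟩
  have hGS : ∀ k, 2 ≤ k → G k ∈ S := fun k hk => by
    rw [hS']; exact Submodule.subset_span ⟨k, hk, rfl⟩
  intro x
  obtain ⟨f, rfl⟩ := Submodule.Quotient.mk_surjective S x
  obtain ⟨p, hp, hfp⟩ := aux_exists b G S hGS hb hb1 hg hg1 (f.natDegree + 1) (by omega) f
    (fun n hn => coeff_eq_zero_of_natDegree_lt (by omega))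
  refine ⟨auxForm b (f.natDegree + 1) p, ⟨⟨f.natDegree + 1, by omega, p, hp, rfl⟩, ?_⟩, ?_⟩
  · exact ((Submodule.Quotient.eq S).2 hfp).symm
  · rintro y ⟨⟨N, hN, p', hp', hy⟩, hyx⟩
    have hy' : y = auxForm b N p' := hy
    have hmem : y - auxForm b (f.natDegree + 1) p ∈ S := by
      have h1 := S.add_mem ((Submodule.Quotient.eq S).1 hyx) hfp
      rwa [sub_add_sub_cancel] at h1
    obtain ⟨M, h, hh⟩ := aux_span G _ (hS' ▸ hmem)
    have hL := hh (M + N + (f.natDegree + 1)) (by omega)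
    have hred : ∀ (n : ℕ) (u : ℕ → R), (∀ k, 2 ≤ k → auxRed k (u k)) →
        ∀ k, 2 ≤ k → auxRed k (if k ≤ n then u k else 0) := by
      intro n u hu k hk
      split_ifs
      · exact hu k hk
      · exact auxRed_zero k
    have hsub : ∀ (n : ℕ) (u v : ℕ → R),
        auxForm b n u - auxForm b n v = auxForm b n (fun k => u k - v k) := by
      intro n u v
      simp only [auxForm, map_sub, sub_mul, Finset.sum_sub_distrib]
      ring
    rw [hy', auxForm_extend b N (M + N + (f.natDegree + 1)) hN (by omega),
      auxForm_extend b (f.natDegree + 1) (M + N + (f.natDegree + 1)) (by omega) (by omega),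
      hsub] at hL
    have h0 := aux_unique b G hb hb1 hg hg1 _ (by omega) _ h
      (fun k hk => auxRed_sub k _ _ (hred N p' hp' k hk) (hred (f.natDegree + 1) p hp k hk)) hL
    rw [← hsub, ← auxForm_extend b N (M + N + (f.natDegree + 1)) hN (by omega),
      ← auxForm_extend b (f.natDegree + 1) (M + N + (f.natDegree + 1)) (by omega) (by omega)] at h0
    rw [hy']
    exact sub_eq_zero.1 h0
end
end

section
/- Let n ≥ 2 be an even integer, let r_n = ∑_{j=0}^{n} (−1)^j A^{n−2j} ∈ R, and let m = A^n·( r_n·(Q_n − 1) − 2·∑_{k=1}^{n/2} A^{n+2−4k} ) ∈ R[t]. Then the image of m in the quotient R-module R[t]/S is nonzero, but (A + A⁻¹) times this image is zero; in particular R[t]/S has a nonzero torsion element. -/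
open Polynomial
open LaurentPolynomial (T)

noncomputable section

lemma Q_props (Q : ℤ → R[X]) (hQ : IsQ Q) (k : ℕ) :
    ((∀ j : ℕ, Odd (j + k) → (Q k).coeff j = 0) ∧ (∀ j : ℕ, k < j → (Q k).coeff j = 0) ∧
      (Q k).coeff k = 1) := by
  obtain ⟨h2, h1, hr⟩ := hQ
  have q0 : Q 0 = 1 := by
    have := hr 0 le_rfl
    norm_num [h1, h2] at this
    exact this
  have q1 : Q 1 = X := by
    have := hr 1 (by norm_num)
    norm_num [h1, q0] at this
    exact this
  induction k using Nat.strong_induction_on with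
  | _ k ih =>
    match k with
    | 0 =>
      simp only [Nat.cast_zero, q0, coeff_one]
      refine ⟨?_, ?_, ?_⟩
      · intro j hj
        rw [if_neg]
        rintro rfl
        simp at hj
      · intro j hj
        rw [if_neg (by omega)]
      · simp
    | 1 =>
      simp only [Nat.cast_one, q1, coeff_X]
      refine ⟨?_, ?_, ?_⟩
      · intro j hj
        rw [if_neg]
        rintro rfl
        exact absurd hj (by decide)
      · intro j hj
        rw [if_neg (by omega)]
      · simp
    | k + 2 =>
      have e : Q ((k + 2 : ℕ) : ℤ) = X * Q ((k + 1 : ℕ) : ℤ) - Q (k : ℤ) := by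
        have := hr ((k + 2 : ℕ) : ℤ) (by positivity)
        rw [this]
        congr 3 <;> push_cast <;> ring_nf
      obtain ⟨a1, a2, a3⟩ := ih k (by omega)
      obtain ⟨b1, b2, b3⟩ := ih (k + 1) (by omega)
      rw [e]
      refine ⟨?_, ?_, ?_⟩
      · intro j hj
        have ha := a1 j (by grind)
        rw [coeff_sub, ha]
        cases j with
        | zero => simp
        | succ j => rw [coeff_X_mul, b1 j (by grind), sub_zero]
      · intro j hj
        rw [coeff_sub, a2 j (by omega)]
        cases j with
        | zero => omega
        | succ j => rw [coeff_X_mul, b2 j (by omega), sub_zero]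
      · rw [coeff_sub, a2 (k + 2) (by omega), coeff_X_mul, b3, sub_zero]

/-- The unit `i` of the complex numbers. -/
def uI : ℂˣ := Units.mk0 Complex.I Complex.I_ne_zero

/-- Evaluation of Laurent polynomials at `A = i`. -/
def ev : R →+* ℂ := LaurentPolynomial.eval₂ (Int.castRingHom ℂ) uI

lemma ev_T (n : ℤ) : ev (T n) = Complex.I ^ n := by
  simp [ev, uI]

lemma ev_even (n : ℤ) (hn : Even n) : ev (T (n + 1) + T (-n - 1)) = 0 := by
  obtain ⟨a, rfl⟩ := hn
  have h : Complex.I ^ (a + a + 1) * Complex.I ^ (a + a + 1) = -1 := by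
    rw [← zpow_add₀ Complex.I_ne_zero, show a + a + 1 + (a + a + 1) = 2 * (2 * a + 1) by ring,
      zpow_mul]
    rw [show Complex.I ^ (2 : ℤ) = -1 by exact_mod_cast Complex.I_sq]
    exact Odd.neg_one_zpow ⟨a, rfl⟩
  rw [map_add, ev_T, ev_T, show -(a + a) - 1 = -(a + a + 1) by ring, zpow_neg]
  have h0 : Complex.I ^ (a + a + 1) ≠ 0 := zpow_ne_zero _ Complex.I_ne_zero
  field_simp
  rw [sq, h]
  ring

lemma geom (n : ℕ) (hn : Even n) : (T 1 + T (-1) : R) *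
    (∑ j ∈ Finset.range (n + 1), (-1 : R) ^ j * T ((n : ℤ) - 2 * j)) =
    T ((n : ℤ) + 1) + T (-(n : ℤ) - 1) := by
  have key : ∀ N : ℕ, (T 1 + T (-1) : R) *
      (∑ j ∈ Finset.range N, (-1 : R) ^ j * T ((n : ℤ) - 2 * j)) =
      T ((n : ℤ) + 1) - (-1) ^ N * T ((n : ℤ) + 1 - 2 * N) := by
    intro N
    induction N with
    | zero => simp
    | succ N ih =>
      rw [Finset.sum_range_succ, mul_add, ih]
      have e1 : (T 1 : R) * T ((n : ℤ) - 2 * N) = T ((n : ℤ) + 1 - 2 * N) := by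
        rw [← LaurentPolynomial.T_add]
        congr 1
        ring
      have e2 : (T (-1) : R) * T ((n : ℤ) - 2 * N) = T ((n : ℤ) + 1 - 2 * (N + 1 : ℕ)) := by
        rw [← LaurentPolynomial.T_add]
        congr 1
        push_cast
        ring
      rw [← e1, ← e2]
      ring
  rw [key, (Even.add_one hn).neg_one_pow]
  rw [show (n : ℤ) + 1 - 2 * (n + 1 : ℕ) = -(n : ℤ) - 1 by push_cast; ring]
  ring

lemma ev_r (n : ℕ) : ev (∑ j ∈ Finset.range (n + 1), (-1 : R) ^ j * T ((n : ℤ) - 2 * j)) =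
    (n + 1) * Complex.I ^ n := by
  rw [map_sum, Finset.sum_congr rfl (g := fun _ => Complex.I ^ n)]
  · simp
  · intro j _
    rw [map_mul, map_pow, map_neg, map_one, ev_T, zpow_sub₀ Complex.I_ne_zero, zpow_mul]
    rw [show Complex.I ^ (2 : ℤ) = -1 by exact_mod_cast Complex.I_sq]
    have : ((-1 : ℂ) ^ j) ≠ 0 := pow_ne_zero _ (by norm_num)
    simp only [zpow_natCast]
    field_simp

theorem stmt_6 (Q : ℤ → R[X]) (hQ : IsQ Q)
    (g : ℤ → R[X])
    (hgeven : ∀ n : ℤ, 2 ≤ n → Even n → g n =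
      C (T (n + 1) + T (-n - 1)) * (Q n - 1) -
        C (2 * (T 1 + T (-1)) * ∑ k ∈ Finset.Icc (1 : ℤ) (n / 2), T (n + 2 - 4 * k)))
    (hgodd : ∀ n : ℤ, 2 ≤ n → ¬ Even n → g n =
      C (T (n + 1) + T (-n - 1)) * (Q n - X) -
        C (2 * ∑ k ∈ Finset.Icc (1 : ℤ) ((n - 1) / 2), T (n + 1 - 4 * k)) * X)
    (S : Submodule R R[X]) (hS : S = Submodule.span R (g '' {n : ℤ | 2 ≤ n}))
    (n : ℕ) (hn : 2 ≤ n) (hne : Even n)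
    (rn : R) (hrn : rn = ∑ j ∈ Finset.range (n + 1), (-1 : R) ^ j * T ((n : ℤ) - 2 * j))
    (m : R[X])
    (hm : m = C (T (n : ℤ)) * (C rn * (Q (n : ℤ) - 1) -
      C (2 * ∑ k ∈ Finset.Icc 1 (n / 2), T ((n : ℤ) + 2 - 4 * (k : ℤ))))) :
    (Submodule.Quotient.mk m : R[X] ⧸ S) ≠ 0 ∧
      (T 1 + T (-1) : R) • (Submodule.Quotient.mk m : R[X] ⧸ S) = 0 := by
  have hQn := Q_props Q hQ
  constructor
  · rw [Ne, Submodule.Quotient.mk_eq_zero]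
    intro hmem
    have hker : ∀ p ∈ S, ev (p.coeff n) = 0 := by
      intro p hp
      rw [hS] at hp
      induction hp using Submodule.span_induction with
      | mem x hx =>
        obtain ⟨k, hk, rfl⟩ := hx
        have hk : 2 ≤ k := hk
        by_cases hev : Even k
        · rw [hgeven k hk hev, coeff_sub, coeff_C_mul, map_sub, map_mul, ev_even k hev, zero_mul,
            coeff_C, if_neg (by omega), map_zero, sub_zero]
        · rw [hgodd k hk hev]
          obtain ⟨l, rfl⟩ := Int.eq_ofNat_of_zero_le (by omega : 0 ≤ k)
          have hl : ¬ Even l := by exact_mod_cast hev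
          have h1 : (X : R[X]).coeff n = 0 := by
            rw [coeff_X, if_neg (by omega)]
          have h2 := (hQn l).1 n (by grind)
          rw [coeff_sub, coeff_C_mul, coeff_C_mul, coeff_sub, h1, h2]
          simp
      | zero => simp
      | add x y _ _ hx hy => rw [coeff_add, map_add, hx, hy, add_zero]
      | smul a x _ hx => rw [coeff_smul, smul_eq_mul, map_mul, hx, mul_zero]
    have h := hker m hmem
    rw [hm, coeff_C_mul, coeff_sub, coeff_C_mul, coeff_sub, (hQn n).2.2, coeff_one,
      if_neg (by omega), coeff_C, if_neg (by omega), sub_zero, sub_zero, mul_one, map_mul, hrn,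
      ev_r, ev_T] at h
    have h0 : (n + 1 : ℂ) ≠ 0 := by exact_mod_cast Nat.succ_ne_zero n
    simp [Complex.I_ne_zero, h0] at h
  · rw [← Submodule.Quotient.mk_smul, Submodule.Quotient.mk_eq_zero]
    have hg : g n ∈ S := by
      rw [hS]
      exact Submodule.subset_span ⟨n, by simpa using hn, rfl⟩
    have : (T 1 + T (-1) : R) • m = (T (n : ℤ) : R) • g n := by
      have hsum : ∑ k ∈ Finset.Icc (1 : ℤ) ((n : ℤ) / 2), (T ((n : ℤ) + 2 - 4 * k) : R) =
          ∑ k ∈ Finset.Icc 1 (n / 2), T ((n : ℤ) + 2 - 4 * (k : ℤ)) := by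
        symm
        refine Finset.sum_bij (fun k _ => (k : ℤ)) ?_ ?_ ?_ ?_
        · intro a ha
          simp only [Finset.mem_Icc] at ha ⊢
          omega
        · intro a _ b _ hab
          exact_mod_cast hab
        · intro b hb
          simp only [Finset.mem_Icc] at hb
          exact ⟨b.toNat, by simp only [Finset.mem_Icc]; omega, by omega⟩
        · intro a _
          rfl
      rw [hgeven n (by exact_mod_cast hn) (by exact_mod_cast hne), hm, hsum, ← geom n hne, ← hrn,
        smul_eq_C_mul, smul_eq_C_mul]
      simp only [C_mul]
      ring
    rw [this]
    exact S.smul_mem _ hg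
end
end

section
/- Let n ≥ 5 be an integer with n ≡ 1 (mod 4), let r_n = ∑_{j=0}^{(n−1)/2} (−1)^j A^{n−1−4j} ∈ R, and let m = A^{n−1}·( r_n·(Q_n − t) − 2t·∑_{k=1}^{(n−1)/4} A^{n+3−8k} ) ∈ R[t]. Then the image of m in the quotient R-module R[t]/S is nonzero, but (A² + A⁻²) times this image is zero; in particular R[t]/S has a nonzero torsion element. -/
open Polynomial
open LaurentPolynomial (T)

noncomputable section

theorem Q_coeff (Q : ℤ → R[X]) (hQ : IsQ Q) (k : ℕ) :
    ((Q k).coeff k = 1 ∧ ∀ j, k < j → (Q k).coeff j = 0) ∧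
    ((Q (k + 1 : ℕ)).coeff (k + 1) = 1 ∧ ∀ j, k + 1 < j → (Q (k + 1 : ℕ)).coeff j = 0) := by
  obtain ⟨h2, h1, h⟩ := hQ
  have h0 : Q 0 = 1 := by rw [h 0 le_rfl]; norm_num [h2, h1]
  have h01 : Q 1 = X := by rw [h 1 (by norm_num)]; norm_num [h0, h1]
  induction k with
  | zero =>
    refine ⟨⟨by simp [h0], fun j hj => ?_⟩, by simp [h01], fun j hj => ?_⟩
    · simp only [Nat.cast_zero, h0, coeff_one]; rw [if_neg (by omega)]
    · simp only [zero_add, Nat.cast_one, h01, coeff_X]; rw [if_neg (by omega)]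
  | succ k ih =>
    refine ⟨ih.2, ?_⟩
    have e : Q (k + 1 + 1 : ℕ) = X * Q (k + 1 : ℕ) - Q k := by
      rw [h _ (by positivity)]
      congr 3 <;> push_cast <;> ring
    obtain ⟨⟨a, b⟩, c, d⟩ := ih
    rw [e]
    refine ⟨?_, fun j hj => ?_⟩
    · rw [coeff_sub, coeff_X_mul, c, b _ (by omega), sub_zero]
    · obtain ⟨i, rfl⟩ : ∃ i, j = i + 1 := ⟨j - 1, by omega⟩
      rw [coeff_sub, coeff_X_mul, d _ (by omega), b _ (by omega), sub_zero]

def phi : R →+* ZMod 2 := LaurentPolynomial.eval₂ (Int.castRingHom (ZMod 2)) 1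

theorem phi_T (k : ℤ) : phi (T k) = 1 := by
  simp [phi]

theorem telescope (a : ℤ) (N : ℕ) :
    (T 2 + T (-2) : R) * ∑ j ∈ Finset.range N, (-1 : R) ^ j * T (a - 4 * j)
      = T (a + 2) - (-1) ^ N * T (a + 2 - 4 * N) := by
  induction N with
  | zero => simp
  | succ N ih =>
    rw [Finset.sum_range_succ, mul_add, ih]
    have e1 : (T (a + 2 - 4 * N) : R) = T 2 * T (a - 4 * N) := by
      rw [← LaurentPolynomial.T_add]; congr 1; ring
    have e2 : (T (a + 2 - 4 * (N + 1 : ℕ)) : R) = T (-2) * T (a - 4 * N) := by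
      rw [← LaurentPolynomial.T_add]; congr 1; push_cast; ring
    rw [e1, e2]; ring

theorem sum_double (b : ℤ) (p : ℕ) :
    (T 2 + T (-2) : R) * ∑ k ∈ Finset.Icc 1 p, T (b + 2 - 8 * (k : ℤ))
      = ∑ k ∈ Finset.Icc (1 : ℤ) (2 * p), T (b - 4 * k) := by
  induction p with
  | zero => simp
  | succ p ih =>
    rw [Finset.sum_Icc_succ_top (by omega), mul_add, ih]
    have : Finset.Icc (1 : ℤ) (2 * (p + 1 : ℕ)) =
        insert (2 * (p : ℤ) + 2) (insert (2 * (p : ℤ) + 1) (Finset.Icc (1 : ℤ) (2 * p))) := by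
      ext x; simp only [Finset.mem_Icc, Finset.mem_insert]; omega
    rw [this, Finset.sum_insert (by simp), Finset.sum_insert (by simp), add_mul,
      ← LaurentPolynomial.T_add, ← LaurentPolynomial.T_add]
    have e1 : 2 + (b + 2 - 8 * ((p + 1 : ℕ) : ℤ)) = b - 4 * (2 * (p : ℤ) + 1) := by
      push_cast; ring
    have e2 : -2 + (b + 2 - 8 * ((p + 1 : ℕ) : ℤ)) = b - 4 * (2 * (p : ℤ) + 2) := by
      push_cast; ring
    rw [e1, e2]; ring

theorem stmt_7 (Q : ℤ → R[X]) (hQ : IsQ Q)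
    (g : ℤ → R[X])
    (hgeven : ∀ n : ℤ, 2 ≤ n → Even n → g n =
      C (T (n + 1) + T (-n - 1)) * (Q n - 1) -
        C (2 * (T 1 + T (-1)) * ∑ k ∈ Finset.Icc (1 : ℤ) (n / 2), T (n + 2 - 4 * k)))
    (hgodd : ∀ n : ℤ, 2 ≤ n → ¬ Even n → g n =
      C (T (n + 1) + T (-n - 1)) * (Q n - X) -
        C (2 * ∑ k ∈ Finset.Icc (1 : ℤ) ((n - 1) / 2), T (n + 1 - 4 * k)) * X)
    (S : Submodule R R[X]) (hS : S = Submodule.span R (g '' {n : ℤ | 2 ≤ n}))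
    (n : ℕ) (hn : 5 ≤ n) (hn4 : n % 4 = 1)
    (rn : R)
    (hrn : rn = ∑ j ∈ Finset.range ((n - 1) / 2 + 1), (-1 : R) ^ j * T ((n : ℤ) - 1 - 4 * j))
    (m : R[X])
    (hm : m = C (T ((n : ℤ) - 1)) * (C rn * (Q (n : ℤ) - X) -
      C (2 * ∑ k ∈ Finset.Icc 1 ((n - 1) / 4), T ((n : ℤ) + 3 - 8 * (k : ℤ))) * X)) :
    (Submodule.Quotient.mk m : R[X] ⧸ S) ≠ 0 ∧
      (T 2 + T (-2) : R) • (Submodule.Quotient.mk m : R[X] ⧸ S) = 0 := by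
  have two : (2 : ZMod 2) = 0 := by decide
  have two' : (1 + 1 : (ZMod 2)[X]) = 0 := CharTwo.add_self_eq_zero 1
  have two2 : phi 2 = 0 := by rw [map_ofNat]; exact two
  constructor
  · rw [Ne, Submodule.Quotient.mk_eq_zero]
    intro hmS
    have key : ∀ x ∈ S, x.map phi = 0 := by
      intro x hx
      rw [hS] at hx
      induction hx using Submodule.span_induction with
      | mem x hx =>
        obtain ⟨i, hi, rfl⟩ := hx
        by_cases he : Even i
        · rw [hgeven i hi he]
          simp [phi_T, two', two2]
        · rw [hgodd i hi he]
          simp [phi_T, two', two2]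
      | zero => simp
      | add x y _ _ hx hy => rw [Polynomial.map_add, hx, hy, add_zero]
      | smul a x _ hx => rw [Polynomial.smul_eq_C_mul, Polynomial.map_mul, hx, mul_zero]
    have h1 := congrArg (fun q => Polynomial.coeff q n) (key m hmS)
    have hr : phi rn = 1 := by
      have h3 : ∀ N : ℕ, phi (∑ j ∈ Finset.range (2 * N + 1),
          (-1 : R) ^ j * T ((n : ℤ) - 1 - 4 * j)) = 1 := by
        intro N
        have hneg : (-1 : ZMod 2) = 1 := by decide
        simp [phi_T, hneg, two]
      rw [hrn, show (n - 1) / 2 + 1 = 2 * ((n - 1) / 4) + 1 by omega]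
      exact h3 _
    have hc := (Q_coeff Q hQ n).1.1
    rw [hm] at h1
    simp [phi_T, hr, two2, hc, coeff_X, show 1 ≠ n by omega] at h1
  · rw [← Submodule.Quotient.mk_smul, Submodule.Quotient.mk_eq_zero]
    have hg : (T 2 + T (-2) : R) • m = (T ((n : ℤ) - 1) : R) • g n := by
      have h1 : (T 2 + T (-2) : R) * rn = T ((n : ℤ) + 1) + T (-(n : ℤ) - 1) := by
        rw [hrn, telescope, Odd.neg_one_pow (by rw [Nat.odd_iff]; omega), neg_one_mul, sub_neg_eq_add]
        congr 2
        · ring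
        · omega
      have h2 := sum_double ((n : ℤ) + 1) ((n - 1) / 4)
      rw [show (2 * ((n - 1) / 4 : ℕ) : ℤ) = ((n : ℤ) - 1) / 2 by omega,
        show (n : ℤ) + 1 + 2 = n + 3 by ring] at h2
      rw [hgodd n (by omega) (by rw [Int.not_even_iff]; omega), hm, ← h1, ← h2,
        Polynomial.smul_eq_C_mul, Polynomial.smul_eq_C_mul]
      simp only [C_mul]
      ring
    rw [hg, hS]
    refine Submodule.smul_mem _ _ (Submodule.subset_span ⟨n, ?_, rfl⟩)
    simp only [Set.mem_ofPred_eq]; omega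
end
end

section
/- Let p_3 ∈ ℤ[A] ⊂ R be nonzero with degree at most 7 in A, let p_1 ∈ R, and set m = p_3·(Q_3 − t) + p_1·t ∈ R[t]. Then the image of m in the quotient R-module R[t]/S is not a torsion element: for every nonzero r ∈ R, r times the image of m is nonzero in R[t]/S. -/
open Polynomial
open LaurentPolynomial (T)

noncomputable section

lemma coeff_T_mul (k : ℤ) (p : R) (i : ℤ) : (T k * p : R).coeff i = p.coeff (i - k) := by
  have h := AddMonoidAlgebra.coeff_single_mul_apply (R := ℤ) p 1 k i
  rw [one_mul, neg_add_eq_sub] at h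
  exact h

lemma arith_core (p3 : Polynomial ℤ) (hp3 : p3 ≠ 0) (hdeg : p3.degree ≤ 7) (p1 : R)
    (h : p3.toLaurent * 2 + (T 4 + T (-4)) * p1 = 0) : False := by
  have key : ∀ i : ℤ, (p3.toLaurent).coeff i * 2 + (p1.coeff (i - 4) + p1.coeff (i + 4)) = 0 := by
    intro i
    have h2 := congrArg (fun q : R => q.coeff i) h
    simp only [add_mul, mul_two, AddMonoidAlgebra.coeff_add, Finsupp.add_apply, coeff_T_mul,
      AddMonoidAlgebra.coeff_zero, Finsupp.zero_apply, sub_neg_eq_add] at h2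
    linarith
  have supp : ∀ i : ℤ, (p3.toLaurent).coeff i ≠ 0 → 0 ≤ i ∧ i ≤ 7 := by
    intro i hi
    rw [← Finsupp.mem_support_iff, LaurentPolynomial.support_coeff_toLaurent] at hi
    simp only [Finset.mem_map] at hi
    obtain ⟨a, ha, rfl⟩ := hi
    have h1 : (a : WithBot ℕ) ≤ 7 := (le_degree_of_mem_supp a ha).trans hdeg
    have h2 : a ≤ 7 := by exact_mod_cast h1
    simp only [Nat.castEmbedding_apply]
    omega
  have hp1 : p1 ≠ 0 := by
    rintro rfl
    apply hp3
    rw [mul_zero, add_zero, mul_two] at h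
    have h4 : p3 + p3 = 0 := by
      apply Polynomial.toLaurent_injective
      rw [map_add, h, map_zero]
    exact self_eq_neg.mp (eq_neg_of_add_eq_zero_left h4)
  have hne : p1.coeff.support.Nonempty := by
    rw [Finsupp.support_nonempty_iff]
    intro h0
    exact hp1 (AddMonoidAlgebra.coeff_injective h0)
  set M := p1.coeff.support.max' hne with hM
  set N := p1.coeff.support.min' hne with hN
  have hMm := Finsupp.mem_support_iff.mp (Finset.max'_mem _ hne)
  have hNm := Finsupp.mem_support_iff.mp (Finset.min'_mem _ hne)
  rw [← hM] at hMm
  rw [← hN] at hNm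
  have hNM : N ≤ M := Finset.min'_le_max' _ hne
  have hMz : p1.coeff (M + 4 + 4) = 0 := by
    by_contra hc
    have := Finset.le_max' _ _ (Finsupp.mem_support_iff.mpr hc)
    omega
  have hNz : p1.coeff (N - 4 - 4) = 0 := by
    by_contra hc
    have := Finset.min'_le _ _ (Finsupp.mem_support_iff.mpr hc)
    omega
  have k1 := key (M + 4)
  have k2 := key (N - 4)
  rw [hMz, add_sub_cancel_right] at k1
  rw [hNz, sub_add_cancel] at k2
  have s1 := supp (M + 4) (by intro h0; rw [h0] at k1; apply hMm; linarith)
  have s2 := supp (N - 4) (by intro h0; rw [h0] at k2; apply hNm; linarith)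
  omega

lemma Q_monic (Q : ℤ → R[X]) (hQ : IsQ Q) : Q 0 = 1 ∧ Q 1 = X ∧
    ∀ n : ℕ, (Q n).Monic ∧ (Q n).degree = n := by
  obtain ⟨h2, h1, hr⟩ := hQ
  have q0 : Q 0 = 1 := by
    rw [hr 0 le_rfl]; norm_num [h1, h2]
  have q1 : Q 1 = X := by
    rw [hr 1 (by norm_num)]; norm_num [h1, q0]
  refine ⟨q0, q1, ?_⟩
  suffices H : ∀ n : ℕ, ((Q n).Monic ∧ (Q n).degree = n) ∧
      ((Q (n + 1 : ℕ)).Monic ∧ (Q (n + 1 : ℕ)).degree = (n + 1 : ℕ)) from fun n => (H n).1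
  intro n
  induction n with
  | zero =>
    simp [q0, q1, monic_X]
  | succ n ih =>
    refine ⟨ih.2, ?_⟩
    obtain ⟨⟨ma, da⟩, mb, db⟩ := ih
    have e : Q ((n + 1 + 1 : ℕ) : ℤ) = X * Q ((n + 1 : ℕ) : ℤ) - Q (n : ℤ) := by
      rw [hr _ (by omega)]
      congr 2
      · congr 1; push_cast; ring
      · push_cast; ring
    have dX : (X * Q ((n + 1 : ℕ) : ℤ)).degree = ((n + 1 + 1 : ℕ) : WithBot ℕ) := by
      rw [mul_comm, degree_mul_X, db]; push_cast; rfl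
    have lt : (Q (n : ℤ)).degree < (X * Q ((n + 1 : ℕ) : ℤ)).degree := by
      rw [dX, da]; exact_mod_cast (by omega)
    rw [e]
    exact ⟨(monic_X.mul mb).sub_of_left lt, (degree_sub_eq_left_of_degree_lt lt).trans dX⟩

lemma T_ne (n : ℤ) (hn : 2 ≤ n) : (T (n + 1) + T (-n - 1) : R) ≠ 0 := by
  intro h
  have h2 := congrArg (fun q : R => q.coeff (n + 1)) h
  simp only [AddMonoidAlgebra.coeff_add, Finsupp.add_apply, LaurentPolynomial.T_apply,
      AddMonoidAlgebra.coeff_zero, Finsupp.zero_apply] at h2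
  rw [if_neg (by omega : ¬ (-n - 1 = n + 1))] at h2
  simp at h2


theorem stmt_8 (Q : ℤ → R[X]) (hQ : IsQ Q)
    (g : ℤ → R[X])
    (hgeven : ∀ n : ℤ, 2 ≤ n → Even n → g n =
      C (T (n + 1) + T (-n - 1)) * (Q n - 1) -
        C (2 * (T 1 + T (-1)) * ∑ k ∈ Finset.Icc (1 : ℤ) (n / 2), T (n + 2 - 4 * k)))
    (hgodd : ∀ n : ℤ, 2 ≤ n → ¬ Even n → g n =
      C (T (n + 1) + T (-n - 1)) * (Q n - X) -
        C (2 * ∑ k ∈ Finset.Icc (1 : ℤ) ((n - 1) / 2), T (n + 1 - 4 * k)) * X)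
    (S : Submodule R R[X]) (hS : S = Submodule.span R (g '' {n : ℤ | 2 ≤ n}))
    (p3 : Polynomial ℤ) (hp3 : p3 ≠ 0) (hdeg : p3.degree ≤ 7) (p1 : R)
    (m : R[X]) (hm : m = C (p3.toLaurent) * (Q 3 - X) + C p1 * X) :
    ∀ r : R, r ≠ 0 → r • (Submodule.Quotient.mk m : R[X] ⧸ S) ≠ 0 := by
  intro r hr hz
  obtain ⟨q0, q1, hmon⟩ := Q_monic Q hQ
  have hdom : IsDomain R := inferInstance
  let K := FractionRing R
  let ι := algebraMap R K
  have hι : Function.Injective ι := IsFractionRing.injective R K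
  let sq : Polynomial.Sequence R := ⟨fun n : ℕ => Q n, fun n => (hmon n).2⟩
  have hu : ∀ i, IsUnit (sq i).leadingCoeff := by
    intro i
    have h1 : (sq i).leadingCoeff = 1 := (hmon i).1
    rw [h1]; exact isUnit_one
  let β : ℤ → R := fun n => 2 * ∑ k ∈ Finset.Icc (1 : ℤ) ((n - 1) / 2), T (n + 1 - 4 * k)
  let v : ℕ → K := fun n => if Even (n : ℤ) then 0
    else 1 + ι (β n) / ι (T ((n : ℤ) + 1) + T (-(n : ℤ) - 1))
  let φ : R[X] →ₗ[R] K := (sq.basis hu).constr R v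
  have hφ : ∀ n : ℕ, φ (Q n) = v n := by
    intro n
    have h1 := (sq.basis hu).constr_basis R v n
    rw [Polynomial.Sequence.basis_eq_self] at h1
    exact h1
  have hCφ : ∀ (a : R) (p : R[X]), φ (C a * p) = ι a * φ p := by
    intro a p
    rw [← smul_eq_C_mul, map_smul, Algebra.smul_def]
  have φ1 : φ 1 = 0 := by
    have := hφ 0
    simpa [q0, v] using this
  have φX : φ X = 1 := by
    have := hφ 1
    simpa [q1, v, β] using this
  have hφodd : ∀ n : ℤ, 2 ≤ n → ¬ Even n →
      ι (T (n + 1) + T (-n - 1)) * (φ (Q n) - 1) = ι (β n) := by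
    intro n hn ho
    have hne : ι (T (n + 1) + T (-n - 1)) ≠ 0 := by
      intro h0
      exact T_ne n hn (hι (by rw [h0, map_zero]))
    obtain ⟨k, rfl⟩ : ∃ k : ℕ, n = k := ⟨n.toNat, by omega⟩
    rw [hφ]
    simp only [v, if_neg ho, add_sub_cancel_left]
    exact mul_div_cancel₀ _ hne
  have hker : S ≤ LinearMap.ker φ := by
    rw [hS, Submodule.span_le]
    rintro _ ⟨n, hn, rfl⟩
    have hn' : 2 ≤ n := hn
    rw [SetLike.mem_coe, LinearMap.mem_ker]
    by_cases he : Even n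
    · rw [hgeven n hn' he, map_sub, hCφ, map_sub, φ1]
      have hv : φ (Q n) = 0 := by
        obtain ⟨k, rfl⟩ : ∃ k : ℕ, n = k := ⟨n.toNat, by omega⟩
        rw [hφ]
        simp only [v, if_pos he]
      rw [hv, ← mul_one (C (2 * _ * _)), hCφ, φ1]
      simp
    · rw [hgodd n hn' he, map_sub, hCφ, map_sub, φX, hφodd n hn' he, hCφ, φX, mul_one]
      exact sub_self _
  have hmem : r • m ∈ S := by
    rw [← Submodule.Quotient.mk_smul] at hz
    exact (Submodule.Quotient.mk_eq_zero S).mp hz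
  have h0 : φ (r • m) = 0 := hker hmem
  rw [map_smul, Algebra.smul_def] at h0
  have hm0 : φ m = 0 := by
    rcases mul_eq_zero.mp h0 with h | h
    · exact absurd (hι (by rw [map_zero]; exact h)) hr
    · exact h
  rw [hm, map_add, hCφ, hCφ, map_sub, φX, mul_one] at hm0
  have h3 := hφodd 3 (by norm_num) (by decide)
  have hβ : β 3 = 2 := by
    simp [β]
  rw [hβ] at h3
  norm_num at h3
  apply arith_core p3 hp3 hdeg p1
  apply hι
  rw [map_zero, map_add, map_mul, map_mul]
  norm_num
  linear_combination (ι (T 4) + ι (T (-4))) * hm0 - ι (toLaurent p3) * h3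
end
end

section
/- For every integer n ≥ 1, the identity P_n − P_{−n} = (−A^{n+2}+A^{−n−2})·Q_n − (−A^{n−2}+A^{−n+2})·Q_{n−2} holds in R[t]. -/
open Polynomial
open LaurentPolynomial (T)

noncomputable section

theorem aux_P (P : ℤ → R[X]) (hP : IsP P) (Q : ℤ → R[X]) (hQ : IsQ Q) (k : ℕ) :
    (P k = C (T k) * (- (C (T 2) : R[X]) * Q k + C (T (-2)) * Q (k - 2)) ∧
     P (-k) = C (T (-k)) * (- (C (T (-2)) : R[X]) * Q k + C (T 2) * Q (k - 2))) ∧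
    (P (k + 1) = C (T (k + 1)) * (- (C (T 2) : R[X]) * Q (k + 1) + C (T (-2)) * Q (k - 1)) ∧
     P (-k - 1) = C (T (-k - 1)) * (- (C (T (-2)) : R[X]) * Q (k + 1) + C (T 2) * Q (k - 1))) := by
  obtain ⟨p0, p1, hp⟩ := hP
  obtain ⟨q2, q1, hq⟩ := hQ
  have e2 : (C (T 2) : R[X]) = C (T 1) * C (T 1) := by
    rw [← C_mul, ← LaurentPolynomial.T_add]; norm_num
  have e3 : (C (T 3) : R[X]) = C (T 1) * C (T 1) * C (T 1) := by
    rw [← C_mul, ← C_mul, ← LaurentPolynomial.T_add, ← LaurentPolynomial.T_add]; norm_num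
  have em2 : (C (T (-2)) : R[X]) = C (T (-1)) * C (T (-1)) := by
    rw [← C_mul, ← LaurentPolynomial.T_add]; norm_num
  have uv : (C (T 1) : R[X]) * C (T (-1)) = 1 := by
    rw [← C_mul, ← LaurentPolynomial.T_add]; simp
  have hback : ∀ m : ℤ, P (m - 2) = C (T (-1)) * X * P (m - 1) - C (T (-1)) * C (T (-1)) * P m := by
    intro m
    have h := hp m
    rw [e2] at h
    generalize (C (T 1) : R[X]) = u at *
    generalize (C (T (-1)) : R[X]) = v at *
    rw [h]
    linear_combination (-(1 + u * v) * P (m-2) + v * X * P (m-1)) * uv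
  have hs : ∀ m : ℤ, (C (T (m + 1)) : R[X]) = C (T m) * C (T 1) := by
    intro m; rw [LaurentPolynomial.T_add, C_mul]
  have hd : ∀ m : ℤ, (C (T (m - 1)) : R[X]) = C (T m) * C (T (-1)) := by
    intro m; rw [sub_eq_add_neg, LaurentPolynomial.T_add, C_mul]
  have q0 : Q 0 = 1 := by
    have := hq 0 le_rfl
    norm_num [q1, q2] at this; exact this
  have qq1 : Q 1 = X := by
    have := hq 1 (by norm_num)
    norm_num [q1, q0] at this; exact this
  induction k with
  | zero =>
    have pm := hback 1
    norm_num at pm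
    have t0 : (C (T 0) : R[X]) = 1 := by simp
    refine ⟨⟨?_, ?_⟩, ?_, ?_⟩
    · norm_num [p0, q0, q2, t0]; ring
    · norm_num [p0, q0, q2, t0]; ring
    · norm_num [p1, qq1, q1, e2, e3]; ring
    · norm_num [pm, p0, p1, qq1, q1, q0]
      rw [e2, e3, em2]
      generalize (C (T 1) : R[X]) = u at *
      generalize (C (T (-1)) : R[X]) = v at *
      linear_combination v * u ^ 2 * X * uv
  | succ k ih =>
    obtain ⟨⟨a, b⟩, c, d⟩ := ih
    have r1 := hp (k + 2)
    have r2 := hback (-k)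
    have r3 := hq (k + 2) (by positivity)
    have r4 := hq k (by positivity)
    push_cast
    rw [show (k : ℤ) + 2 - 1 = k + 1 by ring, show (k : ℤ) + 2 - 2 = k by ring] at r1 r3
    rw [show (k : ℤ) + 1 + 1 = k + 2 by ring, show (k : ℤ) + 1 - 2 = k - 1 by ring,
      show (k : ℤ) + 1 - 1 = k by ring, show -((k : ℤ) + 1) = -k - 1 by ring,
      show -(k : ℤ) - 1 - 1 = -k - 2 by ring]
    have f1 : (C (T ((k : ℤ) + 2)) : R[X]) = C (T k) * C (T 1) * C (T 1) := by
      rw [← hs, ← hs]; congr 2 <;> ring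
    have f2 : (C (T (-(k : ℤ) - 2)) : R[X]) = C (T (-k)) * C (T (-1)) * C (T (-1)) := by
      rw [← hd, ← hd]; congr 2; ring
    refine ⟨⟨c, d⟩, ?_, ?_⟩
    · rw [r1, a, c, r3, r4, f1, hs, e2, em2]
      ring
    · rw [r2, b, d, r3, r4, f2, hd, e2, em2]
      ring

theorem stmt_12 (P : ℤ → R[X]) (hP : IsP P) (Q : ℤ → R[X]) (hQ : IsQ Q) :
    ∀ n : ℤ, 1 ≤ n →
      P n - P (-n) =
        C (-T (n + 2) + T (-n - 2)) * Q n - C (-T (n - 2) + T (-n + 2)) * Q (n - 2) := by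
  intro n hn
  lift n to ℕ using by omega
  obtain ⟨⟨a, b⟩, -⟩ := aux_P P hP Q hQ n
  rw [a, b, sub_eq_add_neg (-(n : ℤ)) 2, show (T ((n : ℤ) - 2) : R) = T n * T (-2) by
    rw [sub_eq_add_neg, LaurentPolynomial.T_add]]
  simp only [LaurentPolynomial.T_add, C_add, C_neg, C_mul]
  ring
end
end

section
/- Let T be the R-submodule of R[t] generated by the elements P_n − P_{−n} for all integers n ≥ 1. Then the quotient R-module R[t]/T is isomorphic to R ⊕ ⊕_{n=1}^{∞} R/(1 − A^{2n+4}), where R/(1 − A^{2n+4}) denotes the quotient of R by the principal ideal generated by 1 − A^{2n+4}. -/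
open Polynomial
open LaurentPolynomial (T)

noncomputable section

namespace Aux

abbrev S (n : ℤ) : R[X] := Polynomial.Chebyshev.S R n

theorem T_inv (n : ℤ) : (T n : R) * T (-n) = 1 := by
  rw [← LaurentPolynomial.T_add]; simp

theorem CT_inv (n : ℤ) : (C (T n : R)) * C (T (-n)) = 1 := by
  rw [← C_mul, T_inv, C_1]

theorem CT_add (m n : ℤ) : (C (T (m + n) : R)) = C (T m) * C (T n) := by
  rw [← C_mul, LaurentPolynomial.T_add]

/-- Closed form of the family. -/
def Q (n : ℤ) : R[X] := C (T n) * (C (T (-2)) * S (n - 2) - C (T 2) * S n)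

theorem Q_rec (n : ℤ) : Q (n + 2) = C (T 1) * X * Q (n + 1) - C (T 2) * Q n := by
  unfold Q
  have h1 := Polynomial.Chebyshev.S_add_two R n
  have h2 := Polynomial.Chebyshev.S_add_two R (n - 2)
  have e1 : n + 2 - 2 = n := by ring
  have e2 : n + 1 - 2 = n - 1 := by ring
  have e3 : n - 2 + 2 = n := by ring
  have e4 : n - 2 + 1 = n - 1 := by ring
  rw [e3, e4] at h2
  rw [e1, e2, CT_add n 2, CT_add n 1, show (2 : ℤ) = 1 + 1 by norm_num, CT_add 1 1]
  rw [show (1 + 1 : ℤ) = 2 by norm_num]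
  simp only [S]
  linear_combination (-C (T n) * C (T 1) ^ 2 * C (T 1) ^ 2) * h1
    + (C (T n) * C (T 1) ^ 2 * C (T (-2))) * h2

theorem P_eq (P : ℤ → R[X]) (hP : IsP P) (n : ℤ) : P n = Q n := by
  obtain ⟨h0, h1, hr⟩ := hP
  have hr' : ∀ n, P (n + 2) = C (T 1) * X * P (n + 1) - C (T 2) * P n := by
    intro n
    have := hr (n + 2)
    rwa [show n + 2 - 1 = n + 1 by ring, show n + 2 - 2 = n by ring] at this
  have key : ∀ n, P n = Q n ∧ P (n + 1) = Q (n + 1) := by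
    intro n
    induction n using Int.induction_on with
    | zero =>
      refine ⟨?_, ?_⟩
      · rw [h0]; simp [Q, S]; ring
      · rw [zero_add, h1]
        simp only [Q, S]
        norm_num
        rw [show (3 : ℤ) = 1 + 2 by norm_num, CT_add]
        ring
    | succ i ih =>
      refine ⟨ih.2, ?_⟩
      rw [show (i : ℤ) + 1 + 1 = i + 2 by ring, hr', Q_rec, ih.1, ih.2]
    | pred i ih =>
      rw [show -(i : ℤ) - 1 + 1 = -i by ring]
      refine ⟨?_, ih.1⟩
      have a := hr' (-(i : ℤ) - 1)
      have b := Q_rec (-(i : ℤ) - 1)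
      rw [show -(i : ℤ) - 1 + 1 = -i by ring, show -(i : ℤ) - 1 + 2 = -i + 1 by ring] at a b
      rw [ih.1, ih.2] at a
      have c := CT_inv 2
      have d : C (T 2) * P (-(i : ℤ) - 1) = C (T 2) * Q (-(i : ℤ) - 1) := by
        linear_combination a - b
      linear_combination C (T (-2)) * d - (P (-(i : ℤ) - 1) - Q (-(i : ℤ) - 1)) * c
  exact (key n).1

/-- shifted partial sums of the `S n` : `f (n+3) = S n + S (n-2) + ...` down to index 1 or 2 -/
def f : ℕ → R[X]
  | 0 => 0
  | 1 => -1
  | k + 2 => f k + S (k - 1)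

theorem f2 : f 2 = 0 := by simp [f, S]
theorem f3 : f 3 = 0 := by simp [f, S]

def c (z : ℤ) : R := T z - T (-z)

def G (k : ℕ) : R[X] := c ((k : ℤ) - 1) • f k

def w (k : ℕ) : R := 1 - T (2 * ((k : ℤ) + 1) + 4)

theorem G0 : G 0 = 0 := by simp [G, f]
theorem G1 : G 1 = 0 := by simp [G, c]
theorem G2 : G 2 = 0 := by simp [G, f2]
theorem G3 : G 3 = 0 := by simp [G, f3]

theorem G_eq (k : ℕ) : G (k + 4) = (-T (-((k : ℤ) + 3)) : R) • w k • f (k + 4) := by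
  rw [smul_smul, G]
  congr 1
  have : (2 * ((k : ℤ) + 1) + 4) = (k + 3) + (k + 3) := by ring
  rw [w, this, LaurentPolynomial.T_add, c]
  push_cast
  rw [show (k : ℤ) + 4 - 1 = k + 3 by ring]
  linear_combination (-T ((k : ℤ) + 3)) * T_inv ((k : ℤ) + 3)

theorem G_eq' (k : ℕ) : w k • f (k + 4) = (-T ((k : ℤ) + 3) : R) • G (k + 4) := by
  rw [G_eq, smul_smul, neg_mul_neg, T_inv, one_smul]

theorem rel (k : ℕ) : Q ((k : ℤ) + 1) - Q (-((k : ℤ) + 1)) =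
    -(G (k + 4) - (T 2 + T (-2) : R) • G (k + 2) + G k) := by
  have e1 : f (k + 2) = f k + S (k - 1) := rfl
  have e2 : f (k + 4) = f (k + 2) + S (k + 1) := by
    rw [show k + 4 = (k + 2) + 2 by ring, f]
    congr 2
    push_cast; ring
  have hn := Polynomial.Chebyshev.S_neg R ((k : ℤ) + 1)
  have hn2 := Polynomial.Chebyshev.S_neg_sub_two R ((k : ℤ) + 1)
  simp only [Q, S, G, c] at *
  rw [hn, hn2, e2, e1]
  push_cast
  rw [show (k : ℤ) + 1 - 2 = k - 1 by ring,
    show (k : ℤ) + 4 - 1 = k + 1 + 2 by ring, show (k : ℤ) + 2 - 1 = k + 1 by ring,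
    show (k : ℤ) - 1 = (k + 1) + (-2) by ring,
    show -((k : ℤ) + 1 + 2) = -(k + 1) + (-2) by ring,
    show -((k : ℤ) + 1 + -2) = -(k + 1) + 2 by ring]
  simp only [smul_eq_C_mul, C_sub, C_add, CT_add _ 2, CT_add _ (-2)]
  ring

theorem S_monic (n : ℕ) : (S n).Monic ∧ (S n).natDegree = n ∧
    (S (n + 1)).Monic ∧ (S (n + 1)).natDegree = n + 1 := by
  induction n with
  | zero => simp [S]
  | succ n ih =>
    obtain ⟨h1, h2, h3, h4⟩ := ih
    push_cast
    refine ⟨h3, h4, ?_⟩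
    have h := Polynomial.Chebyshev.S_add_two R n
    rw [show (n : ℤ) + 1 + 1 = n + 2 by ring]
    simp only [S] at *
    have hm : (X * Polynomial.Chebyshev.S R (n + 1)).Monic := monic_X.mul h3
    have hd : (X * Polynomial.Chebyshev.S R (n + 1)).natDegree = n + 2 := by
      rw [monic_X.natDegree_mul h3, h4, natDegree_X]; ring
    have hlt : (Polynomial.Chebyshev.S R n).degree <
        (X * Polynomial.Chebyshev.S R (n + 1)).degree := by
      rw [degree_eq_natDegree h1.ne_zero, degree_eq_natDegree hm.ne_zero, hd, h2]
      exact_mod_cast (by omega : n < n + 2)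
    rw [h]
    refine ⟨hm.sub_of_left hlt, ?_⟩
    rw [natDegree_sub_eq_left_of_natDegree_lt (by rw [hd, h2]; omega), hd]

theorem f_monic (n : ℕ) : (f (n + 4)).Monic ∧ (f (n + 4)).natDegree = n + 1 := by
  induction n using Nat.strong_induction_on with
  | _ n ih =>
    have e : f (n + 4) = f (n + 2) + S (n + 1) := by
      rw [show n + 4 = (n + 2) + 2 by ring, f]
      congr 2
      push_cast; ring
    obtain ⟨-, -, h3, h4⟩ := S_monic n
    match n with
    | 0 => rw [e, f2, zero_add]; exact ⟨h3, h4⟩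
    | 1 => rw [e, f3, zero_add]; exact ⟨h3, h4⟩
    | m + 2 =>
      obtain ⟨i1, i2⟩ := ih m (by omega)
      have hlt : (f (m + 4)).natDegree < (S (((m + 2 : ℕ) : ℤ) + 1)).natDegree := by
        rw [i2, h4]; omega
      rw [e]
      exact ⟨h3.add_of_right (degree_lt_degree hlt),
        by rw [natDegree_add_eq_right_of_natDegree_lt hlt, h4]⟩

def bs : ℕ → R[X]
  | 0 => 1
  | n + 1 => f (n + 4)

theorem bs_monic (n : ℕ) : (bs n).Monic ∧ (bs n).natDegree = n := by
  cases n with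
  | zero => simp [bs]
  | succ n => exact f_monic n

def sq : Polynomial.Sequence R where
  elems' := bs
  degree_eq' i := by
    rw [degree_eq_natDegree (bs_monic i).1.ne_zero, (bs_monic i).2]

def B : Module.Basis ℕ R R[X] := sq.basis (fun i => by
  have : (sq i).leadingCoeff = 1 := (bs_monic i).1
  rw [this]; exact isUnit_one)

theorem B_apply (n : ℕ) : B n = bs n := by
  simp [B]; rfl

theorem span_eq : Submodule.span R ((fun n : ℤ => Q n - Q (-n)) '' {n : ℤ | 1 ≤ n}) =
    Submodule.span R (Set.range fun k : ℕ => w k • B (k + 1)) := by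
  apply le_antisymm
  · rw [Submodule.span_le]
    have hG : ∀ k, G k ∈ Submodule.span R (Set.range fun k : ℕ => w k • B (k + 1)) := by
      intro k
      match k with
      | 0 => rw [G0]; exact zero_mem _
      | 1 => rw [G1]; exact zero_mem _
      | 2 => rw [G2]; exact zero_mem _
      | 3 => rw [G3]; exact zero_mem _
      | k + 4 =>
        rw [G_eq]
        refine Submodule.smul_mem _ _ (Submodule.subset_span ⟨k, ?_⟩)
        simp only [B_apply, bs]
    rintro _ ⟨n, hn, rfl⟩
    obtain ⟨k, rfl⟩ : ∃ k : ℕ, n = k + 1 := ⟨(n - 1).toNat, by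
      have : 1 ≤ n := hn
      omega⟩
    simp only [rel]
    exact neg_mem (add_mem (sub_mem (hG _) (Submodule.smul_mem _ _ (hG _))) (hG _))
  · rw [Submodule.span_le]
    have hG : ∀ k, G k ∈ Submodule.span R ((fun n : ℤ => Q n - Q (-n)) '' {n : ℤ | 1 ≤ n}) := by
      intro k
      induction k using Nat.strong_induction_on with
      | _ k ih =>
      match k with
      | 0 => rw [G0]; exact zero_mem _
      | 1 => rw [G1]; exact zero_mem _
      | 2 => rw [G2]; exact zero_mem _
      | 3 => rw [G3]; exact zero_mem _
      | k + 4 =>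
        have h := rel k
        have h' : G (k + 4) = (T 2 + T (-2) : R) • G (k + 2) - G k -
            (Q ((k : ℤ) + 1) - Q (-((k : ℤ) + 1))) := by
          rw [h]; abel
        rw [h']
        refine sub_mem (sub_mem (Submodule.smul_mem _ _ (ih _ (by omega))) (ih _ (by omega))) ?_
        exact Submodule.subset_span ⟨(k : ℤ) + 1, by simp, rfl⟩
    rintro _ ⟨k, rfl⟩
    simp only [B_apply, bs, G_eq']
    exact Submodule.smul_mem _ _ (hG _)

section general

variable {A M : Type*} [CommRing A] [AddCommGroup M] [Module A M]

theorem quot_equiv (b : Module.Basis ℕ A M) (v : ℕ → A) :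
    Nonempty ((M ⧸ Submodule.span A (Set.range fun k : ℕ => v k • b (k + 1))) ≃ₗ[A]
      A × DirectSum ℕ fun n => A ⧸ Ideal.span {v n}) := by
  classical
  let g : ℕ → A × DirectSum ℕ fun n => A ⧸ Ideal.span {v n} := fun n =>
    match n with
    | 0 => (1, 0)
    | n + 1 => (0, DirectSum.lof A ℕ (fun n => A ⧸ Ideal.span {v n}) n (Submodule.Quotient.mk 1))
  let φ := b.constr A g
  have hφ : ∀ n, φ (b n) = g n := fun n => b.constr_basis A g n
  have hmk : ∀ n (r : A), r • (Submodule.Quotient.mk 1 : A ⧸ Ideal.span {v n}) =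
      Submodule.Quotient.mk r := by
    intro n r
    rw [← Submodule.Quotient.mk_smul]; simp
  have hsurj : LinearMap.range φ = ⊤ := by
    rw [eq_top_iff]
    rintro ⟨a, x⟩ -
    have h1 : ((a, 0) : A × DirectSum ℕ fun n => A ⧸ Ideal.span {v n}) ∈ LinearMap.range φ :=
      ⟨a • b 0, by rw [map_smul, hφ]; simp [g]⟩
    have h2 : ((0, x) : A × DirectSum ℕ fun n => A ⧸ Ideal.span {v n}) ∈ LinearMap.range φ := by
      induction x using DirectSum.induction_on with
      | zero => exact zero_mem _
      | of i x =>
        obtain ⟨r, rfl⟩ := Submodule.Quotient.mk_surjective _ x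
        refine ⟨r • b (i + 1), ?_⟩
        rw [map_smul, hφ, ← hmk]
        simp only [g, Prod.smul_mk, smul_zero, ← map_smul]
        rfl
      | add x y hx hy => simpa using add_mem hx hy
    simpa using add_mem h1 h2
  have hker : LinearMap.ker φ = Submodule.span A (Set.range fun k : ℕ => v k • b (k + 1)) := by
    apply le_antisymm
    · intro p hp
      have c0 : (LinearMap.fst A _ _).comp φ = b.coord 0 := by
        refine b.ext fun n => ?_
        rw [LinearMap.comp_apply, hφ]
        cases n <;> simp [g]
      have c1 : ∀ n, (DirectSum.component A ℕ (fun n => A ⧸ Ideal.span {v n}) n).comp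
          ((LinearMap.snd A _ _).comp φ) = (Submodule.mkQ _).comp (b.coord (n + 1)) := by
        intro n
        refine b.ext fun m => ?_
        rw [LinearMap.comp_apply, LinearMap.comp_apply, hφ]
        cases m with
        | zero => simp [g]
        | succ m =>
          by_cases h : m = n
          · subst h
            simp [g, DirectSum.component.lof_self]
          · simp [g, DirectSum.component.of, h, Finsupp.single_apply]
      rw [LinearMap.mem_ker] at hp
      rw [← b.linearCombination_repr p, Finsupp.linearCombination_apply]
      refine Submodule.sum_mem _ fun i _ => ?_
      cases i with
      | zero =>
        have := LinearMap.congr_fun c0 p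
        simp [hp] at this
        simp [← this]
      | succ n =>
        have := LinearMap.congr_fun (c1 n) p
        simp only [LinearMap.comp_apply, hp, map_zero] at this
        have h2 := (Submodule.Quotient.mk_eq_zero _).1 this.symm
        rw [Ideal.mem_span_singleton] at h2
        obtain ⟨d, hd⟩ := h2
        rw [Module.Basis.coord_apply] at hd
        simp only [hd]
        rw [mul_comm, mul_smul]
        exact Submodule.smul_mem _ _ (Submodule.subset_span ⟨n, rfl⟩)
    · rw [Submodule.span_le]
      rintro _ ⟨k, rfl⟩
      simp only [SetLike.mem_coe, LinearMap.mem_ker, map_smul, hφ, g, Prod.smul_mk, smul_zero]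
      rw [← map_smul, hmk, (Submodule.Quotient.mk_eq_zero _).2 (Ideal.mem_span_singleton_self _)]
      simp
  rw [← hker]
  exact ⟨φ.quotKerEquivOfSurjective (LinearMap.range_eq_top.1 hsurj)⟩

end general

end Aux

theorem stmt_15 (P : ℤ → R[X]) (hP : IsP P)
    (Tsub : Submodule R R[X])
    (hT : Tsub = Submodule.span R ((fun n : ℤ => P n - P (-n)) '' {n : ℤ | 1 ≤ n})) :
    Nonempty ((R[X] ⧸ Tsub) ≃ₗ[R]
      R × DirectSum ℕ fun n => R ⧸ Ideal.span {(1 : R) - T (2 * ((n : ℤ) + 1) + 4)}) := by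
  obtain rfl : P = Aux.Q := funext (Aux.P_eq P hP)
  rw [Aux.span_eq] at hT
  subst hT
  exact Aux.quot_equiv Aux.B Aux.w
end
end

section
/- For every integer n ≥ 1, the polynomial P_n ∈ R[t] has degree n in t with leading coefficient −A^{n+2}, and the polynomial P_{−n} ∈ R[t] has degree n in t with leading coefficient −A^{−n−2}; in particular, for every nonzero integer n the polynomial P_n has degree |n| in t and its leading coefficient is a unit of R. -/
open Polynomial
open LaurentPolynomial (T)

noncomputable section

theorem aux_seq (Q : ℕ → R[X]) (s c : ℤ) (b : R)
    (h0 : (Q 0).natDegree ≤ 0) (h1 : Q 1 = C (-T c) * X)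
    (hr : ∀ k, Q (k + 2) = C (T s) * X * Q (k + 1) - C b * Q k) (k : ℕ) :
    (Q (k + 1)).degree = ((k + 1 : ℕ) : WithBot ℕ) ∧
      (Q (k + 1)).leadingCoeff = -T (s * k + c) := by
  have key : ∀ k : ℕ, (Q k).natDegree ≤ k ∧ (Q (k + 1)).natDegree ≤ k + 1 ∧
      (Q (k + 1)).coeff (k + 1) = -T (s * k + c) := by
    intro k
    induction k with
    | zero =>
      refine ⟨h0, ?_, ?_⟩
      · rw [h1]
        exact (natDegree_C_mul_le _ _).trans natDegree_X_le
      · simp [h1]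
    | succ k ih =>
      obtain ⟨ha, hb, hc⟩ := ih
      refine ⟨hb, ?_, ?_⟩
      · rw [show k + 1 + 1 = k + 2 from rfl, hr k]
        refine (natDegree_sub_le _ _).trans (max_le ?_ ?_)
        · refine natDegree_mul_le.trans ?_
          have : (C (T s : R) * X).natDegree ≤ 1 := (natDegree_C_mul_le _ _).trans natDegree_X_le
          omega
        · refine (natDegree_C_mul_le _ _).trans ?_
          omega
      · rw [show k + 1 + 1 = k + 2 from rfl, hr k, mul_assoc, coeff_sub, coeff_C_mul, coeff_C_mul,
          show k + 2 = (k + 1) + 1 from rfl, coeff_X_mul, hc,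
          coeff_eq_zero_of_natDegree_lt (show (Q k).natDegree < k + 1 + 1 by omega),
          mul_zero, sub_zero, mul_neg, ← LaurentPolynomial.T_add]
        congr 2
        push_cast
        ring
  obtain ⟨-, hb, hc⟩ := key k
  have hne : (Q (k + 1)).coeff (k + 1) ≠ 0 := by
    rw [hc]
    exact neg_ne_zero.mpr (LaurentPolynomial.isUnit_T _).ne_zero
  have hd := natDegree_eq_of_le_of_coeff_ne_zero hb hne
  refine ⟨?_, ?_⟩
  · have hz : Q (k + 1) ≠ 0 := by
      intro h
      simp [h] at hne
    rw [degree_eq_natDegree hz, hd]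
  · rw [leadingCoeff, hd, hc]

theorem stmt_17 (P : ℤ → R[X]) (hP : IsP P) :
    (∀ n : ℕ, 1 ≤ n →
      (P (n : ℤ)).degree = (n : WithBot ℕ) ∧
        (P (n : ℤ)).leadingCoeff = -T ((n : ℤ) + 2) ∧
      (P (-(n : ℤ))).degree = (n : WithBot ℕ) ∧
        (P (-(n : ℤ))).leadingCoeff = -T (-(n : ℤ) - 2)) ∧
    ∀ n : ℤ, n ≠ 0 →
      (P n).degree = (n.natAbs : WithBot ℕ) ∧ IsUnit (P n).leadingCoeff := by
  obtain ⟨h0, h1, hr⟩ := hP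
  have hback : ∀ n : ℤ, P (n - 2) = C (T (-1)) * X * P (n - 1) - C (T (-2)) * P n := by
    intro n
    have e1 : (C (T (-2)) * C (T 1) : R[X]) = C (T (-1)) := by
      rw [← C_mul, ← LaurentPolynomial.T_add]; norm_num
    have e2 : (C (T (-2)) * C (T 2) : R[X]) = 1 := by
      rw [← C_mul, ← LaurentPolynomial.T_add]; norm_num
    rw [hr n, ← e1]
    linear_combination (-P (n - 2)) * e2
  have hm1 : P (-1) = C (-T (-3)) * X := by
    have h := hback 1
    norm_num at h
    have e1 : (C (T (-1)) * C (T 2) : R[X]) = C (T 1) := by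
      rw [← C_mul, ← LaurentPolynomial.T_add]; norm_num
    have e2 : (C (T (-1)) * C (T (-2)) : R[X]) = C (T (-3)) := by
      rw [← C_mul, ← LaurentPolynomial.T_add]; norm_num
    have e3 : (C (T (-2)) * C (T 3) : R[X]) = C (T 1) := by
      rw [← C_mul, ← LaurentPolynomial.T_add]; norm_num
    rw [h, h0, h1]
    simp only [C_sub, C_neg]
    linear_combination (-X) * e1 - X * e2 + X * e3
  have hd0 : (P 0).natDegree ≤ 0 := by rw [h0, natDegree_C]
  have hpos := aux_seq (fun k => P (k : ℤ)) 1 3 (T 2) (by simpa using hd0) (by simpa using h1)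
    (fun k => by
      have h := hr ((k : ℤ) + 2)
      rw [show (k : ℤ) + 2 - 1 = k + 1 by ring, show (k : ℤ) + 2 - 2 = k by ring] at h
      simpa using h)
  have hneg := aux_seq (fun k => P (-(k : ℤ))) (-1) (-3) (T (-2)) (by simpa using hd0)
    (by simpa using hm1)
    (fun k => by
      have h := hback (-(k : ℤ))
      rw [show -(k : ℤ) - 2 = -((k + 2 : ℕ) : ℤ) by push_cast; ring,
        show -(k : ℤ) - 1 = -((k + 1 : ℕ) : ℤ) by push_cast; ring] at h
      exact h)
  have main : ∀ n : ℕ, 1 ≤ n →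
      (P (n : ℤ)).degree = (n : WithBot ℕ) ∧
        (P (n : ℤ)).leadingCoeff = -T ((n : ℤ) + 2) ∧
      (P (-(n : ℤ))).degree = (n : WithBot ℕ) ∧
        (P (-(n : ℤ))).leadingCoeff = -T (-(n : ℤ) - 2) := by
    intro n hn
    obtain ⟨k, rfl⟩ : ∃ k, n = k + 1 := ⟨n - 1, by omega⟩
    refine ⟨(hpos k).1, (hpos k).2.trans ?_, (hneg k).1, (hneg k).2.trans ?_⟩
    · congr 2
      push_cast
      ring
    · congr 2
      push_cast
      ring
  refine ⟨main, fun n hn => ?_⟩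
  obtain ⟨m1, m2, m3, m4⟩ := main n.natAbs (by omega)
  rcases Int.natAbs_eq n with h | h
  · rw [← h] at m1 m2
    exact ⟨m1, m2 ▸ (LaurentPolynomial.isUnit_T _).neg⟩
  · rw [← h] at m3 m4
    exact ⟨m3, m4 ▸ (LaurentPolynomial.isUnit_T _).neg⟩
end
end
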